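/- Fix constants R*, ε, η > 0. There exists n₀ such that for every n ≥ n₀ there exist a finite codebook C ⊂ ℝⁿ with log₂|C| ≤ n(R* + ε) and an encoder f : ℝⁿ × 𝕊₊ⁿ → C such that for every positive semidefinite Σ ∈ ℝ^{n×n} with tr(Σ) = n, writing Ŵ(Σ) = f(W, Σ) ∈ C for W ~ N(0, Iₙ), one has (1/n) E_W[d_Σ(W, Ŵ(Σ))] ≤ 𝐃_rc(spec(Σ), R*) + η · (tr Σ)/n. -/

import Mathlib

open MeasureTheory Matrix Real

/-- Standard Gaussian measure `N(0, I_n)` on `ℝⁿ`. -/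
noncomputable def stdGaussian (n : ℕ) : Measure (Fin n → ℝ) :=
  Measure.pi fun _ => ProbabilityTheory.gaussianReal 0 1

/-- Distortion `d_Σ(w, v) = (w - v)ᵀ Σ (w - v)`. -/
noncomputable def dSig {n : ℕ} (Sig : Matrix (Fin n) (Fin n) ℝ) (w v : Fin n → ℝ) : ℝ :=
  (w - v) ⬝ᵥ Sig.mulVec (w - v)

/-- Random-coding distortion `D_rc(λ, T) = (1/n) Σᵢ λᵢ/(1 + λᵢ T)`. -/
noncomputable def Drc {n : ℕ} (lam : Fin n → ℝ) (T : ℝ) : ℝ :=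
  (1 / (n : ℝ)) * ∑ i, lam i / (1 + lam i * T)

/-- Random-coding rate `R_rc(λ, T) = (1/(2n)) Σᵢ log₂(1 + λᵢ T)`. -/
noncomputable def Rrc {n : ℕ} (lam : Fin n → ℝ) (T : ℝ) : ℝ :=
  (1 / (2 * (n : ℝ))) * ∑ i, Real.logb 2 (1 + lam i * T)

/-- `T_rc(λ, R)`: the unique `T > 0` with `R_rc(λ, T) = R`. -/
noncomputable def Trc {n : ℕ} (lam : Fin n → ℝ) (R : ℝ) : ℝ :=
  Classical.epsilon fun T => 0 < T ∧ Rrc lam T = R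

/-- `𝐃_rc(λ, R) = D_rc(λ, T_rc(λ, R))`. -/
noncomputable def DDrc {n : ℕ} (lam : Fin n → ℝ) (R : ℝ) : ℝ :=
  Drc lam (Trc lam R)

/-!
Draw codewords from `N(0, q I)`, with `q` in a finite grid, independently of `Σ`. In the eigenbasis
of `Σ`, with `T = T_rc(spec Σ, R)`, weight the coordinates by their Wiener gains
`sᵢ = λᵢ T / (1 + λᵢ T)`; exponential tilting shows that for `q ≈ ∑ sᵢ² / ∑ sᵢ` and a typical source
`w`, a codeword lies within distortion `n (D_rc + η)` of `w` with probability about `2 ^ (-n R)`.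
Hence slightly more than `2 ^ (n R)` codewords miss a typical `w` with doubly exponentially small
probability. A net of `exp (O(n³))` matrices resolves the covariances of trace `n` up to
exponentially small entries, so one draw serves the whole net by a union bound, and by perturbation
every `Σ`. The sources that are missed, or atypical, cost at most the distortion of the zero
codeword; their contribution is small since the Gaussian distortions are uniformly integrable per
dimension.
-/

namespace RandomCoding

open ProbabilityTheory (gaussianReal gaussianPDFReal mgf)
open Filter (atTop)

/-- The gain `u / (1 + u)` with which a source coordinate of signal-to-noise ratio `u` is shrunk by
its minimum mean-square-error estimate. -/
noncomputable def wienerGain (u : ℝ) : ℝ := u / (1 + u)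

/-- The logarithm of `E exp (-(u / (2q)) (w - √q x)²)` for a standard Gaussian `x`. -/
noncomputable def quadLogMgf (q u w : ℝ) : ℝ :=
  -(1 / 2) * log (1 + u) - wienerGain u * w ^ 2 / (2 * q)

lemma wienerGain_nonneg {u : ℝ} (hu : 0 ≤ u) : 0 ≤ wienerGain u := by
  unfold wienerGain; positivity

lemma wienerGain_le_one {u : ℝ} (hu : 0 ≤ u) : wienerGain u ≤ 1 :=
  div_le_one_of_le₀ (by linarith) (by linarith)

lemma wienerGain_sq_le {u : ℝ} (hu : 0 ≤ u) : wienerGain u ^ 2 ≤ wienerGain u := by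
  nlinarith [wienerGain_nonneg hu, wienerGain_le_one hu]

lemma neg_log_one_sub_le {y : ℝ} (hy : y ≤ 1 / 2) : -log (1 - y) ≤ y + 2 * y ^ 2 := by
  have hlog := one_sub_inv_le_log_of_pos (show 0 < 1 - y by linarith)
  have hinv : (1 - y)⁻¹ ≤ 1 + y + 2 * y ^ 2 := by
    rw [inv_le_iff_one_le_mul₀ (by linarith)]
    nlinarith [mul_nonneg (sq_nonneg y) (show 0 ≤ 1 - 2 * y by linarith)]
  linarith

/-! ### Gaussian integrals of quadratic forms -/

section GaussianIntegrals

lemma gaussianPDFReal_mul_exp_neg_sq {q u : ℝ} (hq : 0 < q) (hu : 0 < 1 + u) (w x : ℝ) :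
    gaussianPDFReal 0 1 x * exp (-(u / (2 * q)) * (w - √q * x) ^ 2) =
      (√(2 * π))⁻¹ * exp (-(wienerGain u * w ^ 2 / (2 * q))) *
        exp (-((1 + u) / 2) * (x - wienerGain u * w / √q) ^ 2) := by
  simp only [gaussianPDFReal, NNReal.coe_one, mul_one, sub_zero, mul_assoc, ← exp_add]
  congr 2
  unfold wienerGain
  obtain ⟨r, hr, rfl⟩ : ∃ r, 0 < r ∧ q = r ^ 2 := ⟨√q, sqrt_pos.2 hq, (sq_sqrt hq.le).symm⟩
  rw [sqrt_sq hr.le]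
  field_simp
  ring

lemma integral_exp_neg_mul_sq_gaussianReal {q u : ℝ} (hq : 0 < q) (hu : 0 < 1 + u) (w : ℝ) :
    ∫ x, exp (-(u / (2 * q)) * (w - √q * x) ^ 2) ∂(gaussianReal 0 1) =
      exp (quadLogMgf q u w) := by
  have hexp : exp (quadLogMgf q u w) =
      (√(1 + u))⁻¹ * exp (-(wienerGain u * w ^ 2 / (2 * q))) := by
    rw [quadLogMgf, sub_eq_add_neg, exp_add, sqrt_eq_rpow, ← rpow_neg hu.le, rpow_def_of_pos hu,
      mul_comm (log _)]
  have hsqrt : √(π / ((1 + u) / 2)) = √(2 * π) * (√(1 + u))⁻¹ := by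
    rw [← sqrt_inv, ← sqrt_mul (by positivity)]
    congr 1
    field_simp
  have hpi : √(2 * π) ≠ 0 := by positivity
  rw [ProbabilityTheory.integral_gaussianReal_eq_integral_smul one_ne_zero]
  simp only [smul_eq_mul, gaussianPDFReal_mul_exp_neg_sq hq hu w]
  rw [integral_const_mul,
    integral_sub_right_eq_self (fun x => exp (-((1 + u) / 2) * x ^ 2)), integral_gaussian, hexp,
    hsqrt]
  field_simp

lemma dSig_diagonal {n : ℕ} (u w v : Fin n → ℝ) :
    dSig (diagonal u) w v = ∑ i, u i * (w i - v i) ^ 2 := by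
  simp only [dSig, dotProduct, mulVec_diagonal, Pi.sub_apply]
  exact Finset.sum_congr rfl fun i _ => by ring

instance (n : ℕ) : IsProbabilityMeasure (stdGaussian n) := by
  unfold stdGaussian; infer_instance

lemma mgf_dSig_diagonal {n : ℕ} {q κ : ℝ} {u : Fin n → ℝ} (hq : 0 < q)
    (hu : ∀ i, 0 < 1 + κ * u i) (w : Fin n → ℝ) :
    mgf (fun x => dSig (diagonal u) w (√q • x)) (stdGaussian n) (-(κ / (2 * q))) =
      exp (∑ i, quadLogMgf q (κ * u i) (w i)) := by
  simp only [mgf, dSig_diagonal, Pi.smul_apply, smul_eq_mul, Finset.mul_sum, exp_sum, stdGaussian]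
  rw [integral_fintype_prod_eq_prod (μ := fun _ : Fin n => gaussianReal 0 1)
    (fun i x => exp (-(κ / (2 * q)) * (u i * (w i - √q * x) ^ 2)))]
  refine Finset.prod_congr rfl fun i _ => ?_
  rw [← integral_exp_neg_mul_sq_gaussianReal hq (hu i)]
  congr 1 with x
  ring_nf

lemma integrable_exp_mul_dSig_diagonal {n : ℕ} {q κ : ℝ} {u : Fin n → ℝ} (hq : 0 < q)
    (hu : ∀ i, 0 < 1 + κ * u i) (w : Fin n → ℝ) :
    Integrable (fun x => exp (-(κ / (2 * q)) * dSig (diagonal u) w (√q • x))) (stdGaussian n) :=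
  .of_integral_ne_zero ((mgf_dSig_diagonal hq hu w).trans_ne (exp_pos _).ne')

end GaussianIntegrals

/-! ### Typical sources -/

section Typical

variable {n : ℕ} {γ : ℝ}

lemma stdGaussian_real_weighted_sum_sq_le {c : Fin n → ℝ} (hc0 : ∀ i, 0 ≤ c i)
    (hc1 : ∀ i, c i ≤ 1) (hγ : 0 < γ) (hγ1 : γ ≤ 1) :
    (stdGaussian n).real {w | ∑ i, c i + γ * n ≤ ∑ i, c i * w i ^ 2} ≤
      exp (-(γ ^ 2 / 16 * n)) := by
  set t := γ / 8 with ht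
  have : t ≤ 1 / 4 := by linarith
  have hpos : ∀ i, 0 < 1 + -(2 * t) * c i := fun i => by nlinarith [hc0 i, hc1 i]
  have hform : ∀ x : Fin n → ℝ, dSig (diagonal c) 0 (√1 • x) = ∑ i, c i * x i ^ 2 := fun x => by
    simp [dSig_diagonal]
  have hterm : ∀ i, quadLogMgf 1 (-(2 * t) * c i) 0 ≤ t * c i + 4 * t ^ 2 := fun i => by
    have hlog := neg_log_one_sub_le (y := 2 * t * c i) (by nlinarith [hc0 i, hc1 i])
    have hsq : t ^ 2 * c i ^ 2 ≤ t ^ 2 :=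
      mul_le_of_le_one_right (sq_nonneg t) (pow_le_one₀ (hc0 i) (hc1 i))
    rw [quadLogMgf, show 1 + -(2 * t) * c i = 1 - 2 * t * c i by ring]
    nlinarith
  have hsum : ∑ i, quadLogMgf 1 (-(2 * t) * c i) 0 ≤ t * ∑ i, c i + n * (4 * t ^ 2) := by
    refine (Finset.sum_le_sum fun i _ => hterm i).trans_eq ?_
    simp [Finset.sum_add_distrib, Finset.mul_sum]
  have hmgf := mgf_dSig_diagonal one_pos hpos 0
  have hint := integrable_exp_mul_dSig_diagonal one_pos hpos 0
  simp only [hform, Pi.zero_apply, show -(-(2 * t) / (2 * 1)) = t by ring] at hmgf hint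
  refine (ProbabilityTheory.measure_ge_le_exp_mul_mgf _ (by positivity) hint).trans ?_
  rw [hmgf, ← exp_add, exp_le_exp]
  have h₁ : t * (γ * n) = γ ^ 2 / 8 * n := by rw [ht]; ring
  have h₂ : n * (4 * t ^ 2) = γ ^ 2 / 16 * n := by rw [ht]; ring
  linarith

/-- The source vectors `w` whose energies, weighted by `s²` and by `s (1 - s)` for the Wiener gains
`s` of `u`, exceed their means by at most `γ n`. -/
def typicalSet (γ : ℝ) (u : Fin n → ℝ) : Set (Fin n → ℝ) :=
  {w | ∑ i, wienerGain (u i) ^ 2 * w i ^ 2 ≤ ∑ i, wienerGain (u i) ^ 2 + γ * n} ∩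
  {w | ∑ i, wienerGain (u i) * (1 - wienerGain (u i)) * w i ^ 2 ≤
    ∑ i, wienerGain (u i) * (1 - wienerGain (u i)) + γ * n}

lemma measurableSet_typicalSet (γ : ℝ) (u : Fin n → ℝ) : MeasurableSet (typicalSet γ u) :=
  (measurableSet_le (by fun_prop) (by fun_prop)).inter
    (measurableSet_le (by fun_prop) (by fun_prop))

lemma stdGaussian_real_compl_typicalSet_le {u : Fin n → ℝ} (hu : ∀ i, 0 ≤ u i) (hγ : 0 < γ)
    (hγ1 : γ ≤ 1) :
    (stdGaussian n).real (typicalSet γ u)ᶜ ≤ 2 * exp (-(γ ^ 2 / 16 * n)) := by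
  have hs0 i := wienerGain_nonneg (hu i)
  have hs1 i := wienerGain_le_one (hu i)
  have hsub : (typicalSet γ u)ᶜ ⊆
      {w | ∑ i, wienerGain (u i) ^ 2 + γ * n ≤ ∑ i, wienerGain (u i) ^ 2 * w i ^ 2} ∪
      {w | ∑ i, wienerGain (u i) * (1 - wienerGain (u i)) + γ * n ≤
        ∑ i, wienerGain (u i) * (1 - wienerGain (u i)) * w i ^ 2} := by
    rw [typicalSet, Set.compl_inter]
    refine Set.union_subset_union (fun w hw => ?_) fun w hw => ?_ <;>
      exact (lt_of_not_ge (Set.notMem_ofPred_iff.1 hw)).le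
  have h₁ := stdGaussian_real_weighted_sum_sq_le (fun i => sq_nonneg (wienerGain (u i)))
    (fun i => pow_le_one₀ (hs0 i) (hs1 i)) hγ hγ1
  have h₂ := stdGaussian_real_weighted_sum_sq_le
    (fun i => mul_nonneg (hs0 i) (sub_nonneg.2 (hs1 i)))
    (fun i => mul_le_one₀ (hs1 i) (sub_nonneg.2 (hs1 i)) (sub_le_self 1 (hs0 i))) hγ hγ1
  calc _ ≤ _ := measureReal_mono hsub
    _ ≤ _ := measureReal_union_le _ _
    _ ≤ _ := by linarith

end Typical

/-! ### The probability that a random codeword is good -/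

section SmallBall

lemma exp_mul_one_sub_exp_sub_exp_le_indicator {a b β τ : ℝ} (hβ : 0 ≤ β) (hτ : 0 ≤ τ) (y : ℝ) :
    exp (β * (a - y)) * (1 - exp (τ * (y - b)) - exp (τ * (a - y))) ≤
      (Set.Iic b).indicator 1 y := by
  have hβy := exp_pos (β * (a - y))
  have hup := exp_pos (τ * (y - b))
  have hlow := exp_pos (τ * (a - y))
  rcases le_or_gt y b with hb | hb
  · rw [Set.indicator_of_mem (Set.mem_Iic.2 hb), Pi.one_apply]
    rcases le_total a y with ha | ha
    · have : exp (β * (a - y)) ≤ 1 := exp_le_one_iff.2 (by nlinarith)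
      nlinarith
    · have : 1 ≤ exp (τ * (a - y)) := one_le_exp (by nlinarith)
      nlinarith
  · rw [Set.indicator_of_notMem (Set.notMem_Iic.2 hb)]
    have : 1 ≤ exp (τ * (y - b)) := one_le_exp (by nlinarith)
    nlinarith

lemma half_exp_mul_mgf_le_measureReal_le {Ω : Type*} [MeasurableSpace Ω] {μ : Measure Ω}
    [IsProbabilityMeasure μ] {X : Ω → ℝ} (hX : Measurable X) {a b β τ : ℝ} (hβ : 0 ≤ β)
    (hτ : 0 ≤ τ) (hint : Integrable (fun x => exp (-β * X x)) μ)
    (hint_up : Integrable (fun x => exp ((τ - β) * X x)) μ)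
    (hint_low : Integrable (fun x => exp ((-τ - β) * X x)) μ)
    (hup : exp (-(τ * b)) * mgf X μ (τ - β) ≤ 1 / 4 * mgf X μ (-β))
    (hlow : exp (τ * a) * mgf X μ (-τ - β) ≤ 1 / 4 * mgf X μ (-β)) :
    1 / 2 * (exp (β * a) * mgf X μ (-β)) ≤ μ.real {x | X x ≤ b} := by
  have hmeas : MeasurableSet (X ⁻¹' Set.Iic b) := hX measurableSet_Iic
  set g : Ω → ℝ := fun x => exp (β * a) * (exp (-β * X x) - exp (-(τ * b)) * exp ((τ - β) * X x) -
    exp (τ * a) * exp ((-τ - β) * X x)) with hg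
  have hg_eq : ∀ x, g x = exp (β * (a - X x)) *
      (1 - exp (τ * (X x - b)) - exp (τ * (a - X x))) := fun x => by
    simp only [hg, mul_sub, mul_one, ← exp_add]
    ring_nf
  have hg_le : ∀ x, g x ≤ (X ⁻¹' Set.Iic b).indicator 1 x := fun x =>
    (hg_eq x).trans_le (exp_mul_one_sub_exp_sub_exp_le_indicator hβ hτ (X x))
  have hint_sub : Integrable (fun x => exp (-β * X x) - exp (-(τ * b)) * exp ((τ - β) * X x)) μ :=
    hint.sub (hint_up.const_mul _)
  have hg_int : Integrable g μ := (hint_sub.sub (hint_low.const_mul _)).const_mul _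
  calc 1 / 2 * (exp (β * a) * mgf X μ (-β))
      ≤ exp (β * a) * (mgf X μ (-β) - exp (-(τ * b)) * mgf X μ (τ - β) -
          exp (τ * a) * mgf X μ (-τ - β)) := by nlinarith [exp_pos (β * a)]
    _ = ∫ x, g x ∂μ := by
        rw [hg, integral_const_mul, integral_sub hint_sub (hint_low.const_mul _),
          integral_sub hint (hint_up.const_mul _), integral_const_mul, integral_const_mul]
        rfl
    _ ≤ ∫ x, (X ⁻¹' Set.Iic b).indicator 1 x ∂μ :=
        integral_mono hg_int ((integrable_const 1).indicator hmeas) hg_le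
    _ = μ.real {x | X x ≤ b} := integral_indicator_one hmeas

lemma wienerGain_one_sub_mul {u t : ℝ} (hu : 0 ≤ u) :
    wienerGain ((1 - t) * u) = (1 - t) * wienerGain u / (1 - t * wienerGain u) := by
  have : 0 < 1 + u := by linarith
  unfold wienerGain
  rw [show 1 + (1 - t) * u = (1 + u) * (1 - t * (u / (1 + u))) by field_simp; ring, ← div_div]
  ring

lemma quadLogMgf_one_sub_mul_le {q u t : ℝ} (hq : 0 < q) (hu : 0 ≤ u) (ht : |t| ≤ 1 / 2) (w : ℝ) :
    quadLogMgf q ((1 - t) * u) w ≤ quadLogMgf q u w +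
      t / (2 * q) * (wienerGain u * (1 - wienerGain u) * w ^ 2 + q * wienerGain u) +
      t ^ 2 * (1 + wienerGain u ^ 2 * w ^ 2 / q) := by
  have ht_up := (abs_le.1 ht).2
  have hgain := wienerGain_one_sub_mul (t := t) hu
  have hfactor : 1 + (1 - t) * u = (1 + u) * (1 - t * wienerGain u) := by
    have : 0 < 1 + u := by linarith
    unfold wienerGain; field_simp; ring
  have hs0 := wienerGain_nonneg hu
  have hs1 := wienerGain_le_one hu
  unfold quadLogMgf
  generalize wienerGain u = s at *
  have hts : t * s ≤ 1 / 2 := by nlinarith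
  have hts_pos : 0 < 1 - t * s := by linarith
  have hsq : t ^ 2 * s ^ 2 ≤ t ^ 2 :=
    mul_le_of_le_one_right (sq_nonneg t) (pow_le_one₀ hs0 hs1)
  have hlog : -log (1 + (1 - t) * u) ≤ -log (1 + u) + t * s + 2 * t ^ 2 := by
    rw [hfactor, log_mul (by linarith) hts_pos.ne']
    linarith [neg_log_one_sub_le hts]
  have hgain_ge : s - t * s * (1 - s) - 2 * t ^ 2 * s ^ 2 ≤ (1 - t) * s / (1 - t * s) := by
    rw [le_div_iff₀ hts_pos]
    have h₁ : 0 ≤ t ^ 2 * s ^ 2 := by positivity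
    nlinarith [mul_nonneg h₁ (show 0 ≤ 1 - 2 * (t * s) by linarith), mul_nonneg h₁ hs0]
  have hquad := mul_le_mul_of_nonneg_right hgain_ge (show 0 ≤ w ^ 2 / (2 * q) by positivity)
  calc _ = -(1 / 2) * log (1 + (1 - t) * u) - (1 - t) * s / (1 - t * s) * (w ^ 2 / (2 * q)) := by
        rw [hgain, mul_div_assoc]
    _ ≤ 1 / 2 * (-log (1 + u) + t * s + 2 * t ^ 2) -
          (s - t * s * (1 - s) - 2 * t ^ 2 * s ^ 2) * (w ^ 2 / (2 * q)) := by linarith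
    _ = _ := by field_simp; ring

variable {n : ℕ} {q γ : ℝ} {u w : Fin n → ℝ}

/-- The mean of the distortion of `w` by `√q x`, for `x` standard Gaussian, after tilting the law of
`x` at inverse temperature `1 / (2q)`. -/
noncomputable def tiltedMean (q : ℝ) (u w : Fin n → ℝ) : ℝ :=
  ∑ i, wienerGain (u i) * (1 - wienerGain (u i)) * w i ^ 2 + q * ∑ i, wienerGain (u i)

lemma sum_quadLogMgf_one_sub_mul_le {t : ℝ} (hq : 0 < q) (hu : ∀ i, 0 ≤ u i) (ht : |t| ≤ 1 / 2)
    (hw : w ∈ typicalSet γ u) :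
    ∑ i, quadLogMgf q ((1 - t) * u i) (w i) ≤ ∑ i, quadLogMgf q (u i) (w i) +
      t / (2 * q) * tiltedMean q u w + t ^ 2 * (n * (1 + (1 + γ) / q)) := by
  have henergy : ∑ i, wienerGain (u i) ^ 2 * w i ^ 2 ≤ n * (1 + γ) := by
    have hle : ∑ i, wienerGain (u i) ^ 2 ≤ ∑ _i : Fin n, (1 : ℝ) := Finset.sum_le_sum fun i _ =>
      pow_le_one₀ (wienerGain_nonneg (hu i)) (wienerGain_le_one (hu i))
    have htyp : ∑ i, wienerGain (u i) ^ 2 * w i ^ 2 ≤ ∑ i, wienerGain (u i) ^ 2 + γ * n := hw.1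
    simp only [Finset.sum_const, Finset.card_univ, Fintype.card_fin, nsmul_eq_mul] at hle
    linarith
  calc _ ≤ _ := Finset.sum_le_sum fun i _ => quadLogMgf_one_sub_mul_le hq (hu i) ht (w i)
    _ = ∑ i, quadLogMgf q (u i) (w i) + t / (2 * q) * tiltedMean q u w +
          t ^ 2 * (n + (∑ i, wienerGain (u i) ^ 2 * w i ^ 2) / q) := by
        simp only [tiltedMean, Finset.sum_add_distrib, ← Finset.mul_sum, ← Finset.sum_div,
          Finset.sum_const, Finset.card_univ, Fintype.card_fin, nsmul_eq_mul, mul_one]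
    _ ≤ ∑ i, quadLogMgf q (u i) (w i) + t / (2 * q) * tiltedMean q u w +
          t ^ 2 * (n + n * (1 + γ) / q) := by gcongr
    _ = _ := by ring

lemma exp_le_mul_exp_of_le_sub {x y z c : ℝ} (hxy : x ≤ y - z) (hz : exp (-z) ≤ c) :
    exp x ≤ c * exp y :=
  calc exp x ≤ exp (-z) * exp y := by rw [← exp_add]; exact exp_le_exp.2 (by linarith)
    _ ≤ c * exp y := by gcongr

/-- Tilting by a further `γ / (32 q)`, the second-order term eats only half of the gain. -/
lemma tilt_exponent_le (hq : 0 < q) (hq2 : q ≤ 2) (hγ : γ ≤ 1) :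
    (γ / 16) ^ 2 * (n * (1 + (1 + γ) / q)) ≤ γ / 16 / (2 * q) * (γ * n) - γ ^ 2 / 128 * n := by
  rw [← sub_nonneg]
  have hid : γ / 16 / (2 * q) * (γ * n) - γ ^ 2 / 128 * n - (γ / 16) ^ 2 * (n * (1 + (1 + γ) / q)) =
      γ ^ 2 * n / (256 * q) * (8 - 2 * q - (q + (1 + γ))) := by
    field_simp
    ring
  rw [hid]
  have : 0 ≤ γ ^ 2 * n / (256 * q) := by positivity
  nlinarith

lemma half_exp_tiltedMean_mul_le (hu : ∀ i, 0 ≤ u i) (hq : 0 < q) (hq2 : q ≤ 2) (hγ : 0 < γ)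
    (hγ1 : γ ≤ 1) (hexp : exp (-(γ ^ 2 / 128 * n)) ≤ 1 / 4) (hw : w ∈ typicalSet γ u) :
    1 / 2 * exp (1 / (2 * q) * (tiltedMean q u w - γ * n) + ∑ i, quadLogMgf q (u i) (w i)) ≤
      (stdGaussian n).real {x | dSig (diagonal u) w (√q • x) ≤ tiltedMean q u w + γ * n} := by
  set θ := γ / 16 with hθ
  have hpos : ∀ κ : ℝ, 0 ≤ κ → ∀ i, 0 < 1 + κ * u i := fun κ hκ i => by
    have := mul_nonneg hκ (hu i); linarith
  have hmgf κ (hκ : 0 ≤ κ) := mgf_dSig_diagonal hq (hpos κ hκ) w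
  have hint κ (hκ : 0 ≤ κ) := integrable_exp_mul_dSig_diagonal hq (hpos κ hκ) w
  have hup : θ / (2 * q) - 1 / (2 * q) = -((1 - θ) / (2 * q)) := by ring
  have hlow : -(θ / (2 * q)) - 1 / (2 * q) = -((1 - -θ) / (2 * q)) := by ring
  have hθ_up : |θ| ≤ 1 / 2 := abs_le.2 ⟨by linarith, by linarith⟩
  have hθ_low : |-θ| ≤ 1 / 2 := by rwa [abs_neg]
  have hsecond := tilt_exponent_le (n := n) hq hq2 hγ1
  rw [← hθ] at hsecond
  have hsum_up := sum_quadLogMgf_one_sub_mul_le hq hu hθ_up hw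
  have hsum_low := sum_quadLogMgf_one_sub_mul_le hq hu hθ_low hw
  have hmgf_one := hmgf 1 zero_le_one
  simp only [one_mul] at hmgf_one
  have htilt := half_exp_mul_mgf_le_measureReal_le (μ := stdGaussian n)
    (X := fun x => dSig (diagonal u) w (√q • x)) (a := tiltedMean q u w - γ * n)
    (b := tiltedMean q u w + γ * n) (β := 1 / (2 * q)) (τ := θ / (2 * q))
    (by simp only [dSig_diagonal, Pi.smul_apply]; fun_prop) (by positivity) (by positivity)
    (hint 1 zero_le_one) (hup ▸ hint _ (by linarith)) (hlow ▸ hint _ (by linarith)) ?_ ?_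
  · rwa [hmgf_one, ← exp_add] at htilt
  · rw [hup, hmgf _ (by linarith), hmgf_one, ← exp_add]
    exact exp_le_mul_exp_of_le_sub (by linarith) hexp
  · rw [hlow, hmgf _ (by linarith), hmgf_one, ← exp_add]
    refine exp_le_mul_exp_of_le_sub ?_ hexp
    rw [neg_sq, neg_div, neg_mul] at hsum_low
    linarith

lemma half_exp_le_real_dSig_diagonal_le (hu : ∀ i, 0 ≤ u i) (hq : 0 < q) (hq2 : q ≤ 2)
    (hgain : ∑ i, wienerGain (u i) ^ 2 ≤ q * ∑ i, wienerGain (u i)) (hγ : 0 < γ) (hγ1 : γ ≤ 1)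
    (hexp : exp (-(γ ^ 2 / 128 * n)) ≤ 1 / 4) (hw : w ∈ typicalSet γ u) :
    1 / 2 * exp (-(1 / 2 * ∑ i, log (1 + u i) + γ * n / q)) ≤
      (stdGaussian n).real {x | dSig (diagonal u) w (√q • x) ≤
        ∑ i, wienerGain (u i) * (1 - wienerGain (u i)) + q * ∑ i, wienerGain (u i) +
          2 * γ * n} := by
  have hw₁ : ∑ i, wienerGain (u i) ^ 2 * w i ^ 2 ≤ ∑ i, wienerGain (u i) ^ 2 + γ * n := hw.1
  have hw₂ : ∑ i, wienerGain (u i) * (1 - wienerGain (u i)) * w i ^ 2 ≤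
    ∑ i, wienerGain (u i) * (1 - wienerGain (u i)) + γ * n := hw.2
  have hrate : 1 / (2 * q) * (tiltedMean q u w - γ * n) + ∑ i, quadLogMgf q (u i) (w i) =
      -(1 / 2 * ∑ i, log (1 + u i)) + 1 / (2 * q) * (q * ∑ i, wienerGain (u i) -
        ∑ i, wienerGain (u i) ^ 2 * w i ^ 2 - γ * n) := by
    have hsplit : ∑ i, wienerGain (u i) * (1 - wienerGain (u i)) * w i ^ 2 =
        ∑ i, wienerGain (u i) * w i ^ 2 - ∑ i, wienerGain (u i) ^ 2 * w i ^ 2 := by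
      rw [← Finset.sum_sub_distrib]
      exact Finset.sum_congr rfl fun i _ => by ring
    simp only [tiltedMean, quadLogMgf, Finset.sum_sub_distrib, ← Finset.mul_sum,
      ← Finset.sum_div, hsplit]
    ring
  calc _ ≤ 1 / 2 * exp (1 / (2 * q) * (tiltedMean q u w - γ * n) +
          ∑ i, quadLogMgf q (u i) (w i)) := by
        have hloss : -(γ * n / q) ≤ 1 / (2 * q) * (q * ∑ i, wienerGain (u i) -
            ∑ i, wienerGain (u i) ^ 2 * w i ^ 2 - γ * n) :=
          calc -(γ * n / q) = 1 / (2 * q) * (-(2 * (γ * n))) := by field_simp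
            _ ≤ _ := by gcongr; linarith
        rw [hrate]
        gcongr
        linarith
    _ ≤ _ := half_exp_tiltedMean_mul_le hu hq hq2 hγ hγ1 hexp hw
    _ ≤ _ := measureReal_mono <| Set.ofPred_subset_ofPred_of_imp fun x hx => hx.trans <| by
        unfold tiltedMean; linarith

end SmallBall

/-! ### The random-coding curves -/

section RandomCodingCurves

variable {n : ℕ} {lam : Fin n → ℝ} {R : ℝ}

lemma continuousOn_Rrc (hlam : ∀ i, 0 ≤ lam i) : ContinuousOn (Rrc lam) (Set.Ici 0) := by
  unfold Rrc logb
  refine continuousOn_const.mul (continuousOn_finsetSum _ fun i _ => (ContinuousOn.log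
    (by fun_prop) fun T (hT : 0 ≤ T) => ?_).div_const _)
  have := mul_nonneg (hlam i) hT
  positivity

lemma exists_le_Rrc (hlam : ∀ i, 0 ≤ lam i) {i : Fin n} (hi : 0 < lam i) (hR : 0 ≤ R) :
    ∃ T, 0 ≤ T ∧ R ≤ Rrc lam T := by
  have hn : (0 : ℝ) < n := by exact_mod_cast i.pos
  set T := (2 ^ (2 * n * R) - 1) / lam i with hT_def
  have hT : 0 ≤ T := div_nonneg (sub_nonneg.2 (one_le_rpow one_le_two (by positivity))) hi.le
  refine ⟨T, hT, ?_⟩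
  calc R = 1 / (2 * n) * logb 2 (1 + lam i * T) := by
        rw [hT_def, mul_div_cancel₀ _ hi.ne', add_sub_cancel, logb_rpow two_pos (by norm_num)]
        field_simp
    _ ≤ Rrc lam T := by
        unfold Rrc
        gcongr
        exact Finset.single_le_sum (f := fun j => logb 2 (1 + lam j * T)) (fun j _ =>
          logb_nonneg one_lt_two (le_add_of_nonneg_right (mul_nonneg (hlam j) hT)))
          (Finset.mem_univ i)

lemma Trc_spec (hlam : ∀ i, 0 ≤ lam i) {i : Fin n} (hi : 0 < lam i) (hR : 0 < R) :
    0 < Trc lam R ∧ Rrc lam (Trc lam R) = R := by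
  refine Classical.epsilon_spec (p := fun T => 0 < T ∧ Rrc lam T = R) ?_
  have hzero : Rrc lam 0 = 0 := by simp [Rrc]
  obtain ⟨T₁, hT₁, hRT₁⟩ := exists_le_Rrc hlam hi hR.le
  obtain ⟨T, hT, rfl⟩ := intermediate_value_Icc hT₁
    ((continuousOn_Rrc hlam).mono Set.Icc_subset_Ici_self) ⟨hzero.trans_le hR.le, hRT₁⟩
  exact ⟨T, hT.1.lt_of_ne fun h => hR.ne' (h ▸ hzero), rfl⟩

end RandomCodingCurves

/-! ### Covariances in spectral coordinates -/

/-- A covariance `U diag(lam) Uᵀ` of trace `n`, given by its eigendata, since the target distortion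
`DDrc lam R` is a function of the eigenvalues. -/
structure SpectralCov (n : ℕ) where
  U : Matrix (Fin n) (Fin n) ℝ
  lam : Fin n → ℝ
  mul_transpose : U * Uᵀ = 1
  lam_nonneg : ∀ i, 0 ≤ lam i
  sum_lam : ∑ i, lam i = n

namespace SpectralCov

variable {n : ℕ} (S : SpectralCov n) {R : ℝ}

/-- The covariance matrix with eigendata `S`. -/
def cov : Matrix (Fin n) (Fin n) ℝ := S.U * diagonal S.lam * S.Uᵀ

lemma exists_lam_pos (hn : 0 < n) : ∃ i, 0 < S.lam i := by
  by_contra! h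
  have hsum := Finset.sum_nonpos (s := Finset.univ) fun i _ => h i
  rw [S.sum_lam, Nat.cast_nonpos] at hsum
  omega

lemma Trc_pos (hn : 0 < n) (hR : 0 < R) : 0 < Trc S.lam R :=
  let ⟨_, hi⟩ := S.exists_lam_pos hn
  (Trc_spec S.lam_nonneg hi hR).1

lemma lam_mul_Trc_nonneg (hn : 0 < n) (hR : 0 < R) (i : Fin n) : 0 ≤ S.lam i * Trc S.lam R :=
  mul_nonneg (S.lam_nonneg i) (S.Trc_pos hn hR).le

lemma sum_log_one_add_mul_Trc (hn : 0 < n) (hR : 0 < R) :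
    ∑ i, log (1 + S.lam i * Trc S.lam R) = 2 * n * (R * log 2) := by
  obtain ⟨i, hi⟩ := S.exists_lam_pos hn
  have hrate := (Trc_spec S.lam_nonneg hi hR).2
  have hlog : 0 < log 2 := log_pos one_lt_two
  unfold Rrc logb at hrate
  rw [← Finset.sum_div] at hrate
  field_simp at hrate
  linarith

lemma sum_wienerGain (hn : 0 < n) :
    ∑ i, wienerGain (S.lam i * Trc S.lam R) = Trc S.lam R * (n * DDrc S.lam R) := by
  unfold wienerGain DDrc Drc
  rw [← mul_assoc (n : ℝ), mul_one_div_cancel (by positivity), one_mul, Finset.mul_sum]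
  exact Finset.sum_congr rfl fun i _ => by ring

lemma DDrc_nonneg (hn : 0 < n) (hR : 0 < R) : 0 ≤ DDrc S.lam R :=
  mul_nonneg (by positivity) <| Finset.sum_nonneg fun i _ =>
    div_nonneg (S.lam_nonneg i) (add_nonneg zero_le_one (S.lam_mul_Trc_nonneg hn hR i))

lemma two_mul_rate_le_Trc (hn : 0 < n) (hR : 0 < R) : 2 * (R * log 2) ≤ Trc S.lam R := by
  have hlog : ∑ i, log (1 + S.lam i * Trc S.lam R) ≤ n * Trc S.lam R := by
    rw [← S.sum_lam, Finset.sum_mul]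
    exact Finset.sum_le_sum fun i _ => by
      linarith [log_le_sub_one_of_pos (show 0 < 1 + S.lam i * Trc S.lam R by
        linarith [S.lam_mul_Trc_nonneg hn hR i])]
  rw [S.sum_log_one_add_mul_Trc hn hR, mul_assoc, mul_left_comm] at hlog
  exact le_of_mul_le_mul_left hlog (by positivity)

end SpectralCov

lemma dSig_mul_mul_transpose {n : ℕ} (U A : Matrix (Fin n) (Fin n) ℝ) (w v : Fin n → ℝ) :
    dSig (U * A * Uᵀ) w v = dSig A (Uᵀ *ᵥ w) (Uᵀ *ᵥ v) := by
  unfold dSig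
  rw [← mulVec_mulVec, ← mulVec_mulVec, dotProduct_mulVec, ← mulVec_transpose, mulVec_sub]

lemma measurePreserving_transpose_mulVec {n : ℕ} {U : Matrix (Fin n) (Fin n) ℝ}
    (hU : U * Uᵀ = 1) :
    MeasurePreserving (fun w => Uᵀ *ᵥ w) (stdGaussian n) (stdGaussian n) := by
  have hmem : Uᵀ ∈ unitary (Matrix (Fin n) (Fin n) ℝ) := by
    rw [Unitary.mem_iff, star_eq_conjTranspose, conjTranspose_eq_transpose_of_trivial,
      transpose_transpose]
    exact ⟨hU, mul_eq_one_comm.1 hU⟩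
  let rotation := Unitary.linearIsometryEquiv
    ⟨toEuclideanCLM (n := Fin n) (𝕜 := ℝ) Uᵀ, Unitary.map_mem _ hmem⟩
  have htoLp : MeasurePreserving (WithLp.toLp 2) (stdGaussian n)
      (ProbabilityTheory.stdGaussian (EuclideanSpace ℝ (Fin n))) :=
    ⟨by fun_prop, ProbabilityTheory.map_pi_eq_stdGaussian⟩
  have hrotation : MeasurePreserving rotation
      (ProbabilityTheory.stdGaussian (EuclideanSpace ℝ (Fin n)))
      (ProbabilityTheory.stdGaussian (EuclideanSpace ℝ (Fin n))) :=
    ⟨rotation.continuous.measurable, ProbabilityTheory.stdGaussian_map rotation⟩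
  have hofLp : MeasurePreserving WithLp.ofLp
      (ProbabilityTheory.stdGaussian (EuclideanSpace ℝ (Fin n))) (stdGaussian n) := by
    refine ⟨by fun_prop, ?_⟩
    rw [← htoLp.map_eq, Measure.map_map (by fun_prop) (by fun_prop)]
    exact Measure.map_id
  exact hofLp.comp (hrotation.comp htoLp)

/-! ### Codeword gains -/

section Gains

lemma exists_finset_forall_mem_Icc_exists_le_add {δ : ℝ} (hδ : 0 < δ) :
    ∃ grid : Finset ℝ, (∀ q ∈ grid, δ ≤ q ∧ q ≤ 1 + δ) ∧
      ∀ r ∈ Set.Icc (0 : ℝ) 1, ∃ q ∈ grid, r ≤ q ∧ q ≤ r + δ := by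
  refine ⟨(Finset.range (⌊1 / δ⌋₊ + 1)).image fun k : ℕ => (k + 1) * δ, ?_, fun r hr => ?_⟩
  · simp only [Finset.forall_mem_image, Finset.mem_range, Nat.lt_succ_iff]
    intro k hk
    have hkδ := (le_div_iff₀ hδ).1 ((Nat.le_floor_iff (by positivity)).1 hk)
    have : 0 ≤ k * δ := by positivity
    constructor <;> linarith
  · refine ⟨_, Finset.mem_image_of_mem _ (Finset.mem_range.2 (Nat.lt_succ_of_le (Nat.floor_mono
      (show r / δ ≤ 1 / δ by gcongr; exact hr.2)))), ?_, ?_⟩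
    · exact ((div_lt_iff₀ hδ).1 (Nat.lt_floor_add_one (r / δ))).le
    · have := (le_div_iff₀ hδ).1 (Nat.floor_le (div_nonneg hr.1 hδ.le))
      linarith

variable {n : ℕ} {q b p ε : ℝ}

/-- For all sources `w` outside an event of probability `ε`, a codeword drawn from `N(0, q I)` has
distortion at most `b` with probability at least `p`. -/
def IsHittable (Sig : Matrix (Fin n) (Fin n) ℝ) (q b p ε : ℝ) : Prop :=
  ∃ A : Set (Fin n → ℝ), MeasurableSet A ∧ (stdGaussian n).real Aᶜ ≤ ε ∧
    ∀ w ∈ A, p ≤ (stdGaussian n).real {x | dSig Sig w (√q • x) ≤ b}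

lemma IsHittable.mono {Sig : Matrix (Fin n) (Fin n) ℝ} (h : IsHittable Sig q b p ε) {p' ε' : ℝ}
    (hp : p' ≤ p) (hε : ε ≤ ε') : IsHittable Sig q b p' ε' :=
  let ⟨A, hA, hAε, hAp⟩ := h
  ⟨A, hA, hAε.trans hε, fun w hw => hp.trans (hAp w hw)⟩

@[fun_prop]
lemma measurable_dSig {α : Type*} [MeasurableSpace α] (Sig : Matrix (Fin n) (Fin n) ℝ)
    {f g : α → Fin n → ℝ} (hf : Measurable f) (hg : Measurable g) :
    Measurable fun a => dSig Sig (f a) (g a) := by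
  unfold dSig dotProduct mulVec dotProduct
  fun_prop

lemma IsHittable.mul_mul_transpose {U A : Matrix (Fin n) (Fin n) ℝ} (h : IsHittable A q b p ε)
    (hU : U * Uᵀ = 1) : IsHittable (U * A * Uᵀ) q b p ε := by
  obtain ⟨E, hE, hEε, hEp⟩ := h
  have hrot := measurePreserving_transpose_mulVec hU
  refine ⟨_, hrot.measurable hE, ?_, fun w hw => (hEp _ hw).trans_eq ?_⟩
  · rwa [← Set.preimage_compl, hrot.measureReal_preimage hE.compl.nullMeasurableSet]
  · have hball : MeasurableSet {x | dSig A (Uᵀ *ᵥ w) (√q • x) ≤ b} :=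
      measurableSet_le (by fun_prop) measurable_const
    rw [← hrot.measureReal_preimage hball.nullMeasurableSet]
    congr 1 with x
    simp only [Set.mem_preimage, Set.mem_ofPred_eq, dSig_mul_mul_transpose, mulVec_smul]

lemma dSig_diagonal_mul (lam : Fin n → ℝ) (T : ℝ) (w v : Fin n → ℝ) :
    dSig (diagonal fun i => lam i * T) w v = T * dSig (diagonal lam) w v := by
  simp only [dSig_diagonal, Finset.mul_sum]
  exact Finset.sum_congr rfl fun i _ => by ring

lemma sum_wienerGain_sq_le {u : Fin n → ℝ} (hu : ∀ i, 0 ≤ u i) :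
    ∑ i, wienerGain (u i) ^ 2 ≤ ∑ i, wienerGain (u i) :=
  Finset.sum_le_sum fun i _ => wienerGain_sq_le (hu i)

lemma sum_wienerGain_le {u : Fin n → ℝ} (hu : ∀ i, 0 ≤ u i) : ∑ i, wienerGain (u i) ≤ n :=
  (Finset.sum_le_sum fun i _ => wienerGain_le_one (hu i)).trans_eq (by simp)

/-- Codewords of variance `q = ∑ s² / ∑ s` have optimal rate and distortion for the Wiener gains
`s`; the grid only has to approximate this ratio. -/
lemma exists_mem_grid_sum_wienerGain_sq_le {u : Fin n → ℝ} (hu : ∀ i, 0 ≤ u i) {δ : ℝ}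
    {grid : Finset ℝ} (hgrid : ∀ r ∈ Set.Icc (0 : ℝ) 1, ∃ q ∈ grid, r ≤ q ∧ q ≤ r + δ) :
    ∃ q ∈ grid, ∑ i, wienerGain (u i) ^ 2 ≤ q * ∑ i, wienerGain (u i) ∧
      q * ∑ i, wienerGain (u i) ≤ ∑ i, wienerGain (u i) ^ 2 + δ * n := by
  have hsq := sum_wienerGain_sq_le hu
  have hle := sum_wienerGain_le hu
  have hsq0 : 0 ≤ ∑ i, wienerGain (u i) ^ 2 := Finset.sum_nonneg fun i _ => sq_nonneg _
  generalize ∑ i, wienerGain (u i) ^ 2 = s₂ at *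
  generalize ∑ i, wienerGain (u i) = s₁ at *
  obtain ⟨q, hq, hlow, hup⟩ := hgrid (s₂ / s₁)
    ⟨div_nonneg hsq0 (hsq0.trans hsq), div_le_one_of_le₀ hsq (hsq0.trans hsq)⟩
  have hratio : s₂ / s₁ * s₁ = s₂ := div_mul_cancel_of_imp fun h => le_antisymm (h ▸ hsq) hsq0
  exact ⟨q, hq, by nlinarith, by nlinarith⟩

lemma SpectralCov.exists_mem_grid_isHittable (hn : 0 < n) (S : SpectralCov n) {R η δ γ : ℝ}
    (hR : 0 < R) (hγ : 0 < γ) (hγδ : 2 * γ ≤ δ) (hδ : δ ≤ 1) (hδη : δ ≤ η * (R * log 2))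
    (hexp : exp (-(γ ^ 2 / 128 * n)) ≤ 1 / 4) {grid : Finset ℝ}
    (hgrid_mem : ∀ q ∈ grid, δ ≤ q ∧ q ≤ 1 + δ)
    (hgrid : ∀ r ∈ Set.Icc (0 : ℝ) 1, ∃ q ∈ grid, r ≤ q ∧ q ≤ r + δ) :
    ∃ q ∈ grid, IsHittable S.cov q (n * (DDrc S.lam R + η))
      (1 / 2 * exp (-(n * (R * log 2 + γ / δ)))) (2 * exp (-(γ ^ 2 / 16 * n))) := by
  have hu := S.lam_mul_Trc_nonneg hn hR
  have hT := S.Trc_pos hn hR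
  have hδ0 : 0 < δ := by linarith
  obtain ⟨q, hq, hq_low, hq_up⟩ := exists_mem_grid_sum_wienerGain_sq_le hu hgrid
  obtain ⟨hδq, hqδ⟩ := hgrid_mem q hq
  have hlevel : ∑ i, wienerGain (S.lam i * Trc S.lam R) *
        (1 - wienerGain (S.lam i * Trc S.lam R)) +
      q * ∑ i, wienerGain (S.lam i * Trc S.lam R) + 2 * γ * n ≤
      Trc S.lam R * (n * (DDrc S.lam R + η)) := by
    have hηT : (δ + 2 * γ) * n ≤ Trc S.lam R * η * n := by
      have hη : 0 < η := pos_of_mul_pos_left (hδ0.trans_le hδη)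
        (mul_nonneg hR.le (log_nonneg one_le_two))
      have := S.two_mul_rate_le_Trc hn hR
      gcongr
      nlinarith
    have hsplit := S.sum_wienerGain (R := R) hn
    simp only [mul_sub, mul_one, ← sq, Finset.sum_sub_distrib]
    linarith
  refine ⟨q, hq, IsHittable.mul_mul_transpose ⟨typicalSet γ fun i => S.lam i * Trc S.lam R,
    measurableSet_typicalSet _ _, stdGaussian_real_compl_typicalSet_le hu hγ (by linarith),
    fun w hw => ?_⟩ S.mul_transpose⟩
  calc 1 / 2 * exp (-(n * (R * log 2 + γ / δ)))
      ≤ 1 / 2 * exp (-(1 / 2 * ∑ i, log (1 + S.lam i * Trc S.lam R) + γ * n / q)) := by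
        rw [S.sum_log_one_add_mul_Trc hn hR]
        have : γ * n / q ≤ γ * n / δ := by gcongr
        gcongr
        linarith [mul_div_right_comm γ (n : ℝ) δ]
    _ ≤ _ := half_exp_le_real_dSig_diagonal_le hu (hδ0.trans_le hδq) (by linarith) hq_low hγ
        (by linarith) hexp hw
    _ ≤ _ := measureReal_mono <| Set.ofPred_subset_ofPred.2 fun x hx => by
        rw [dSig_diagonal_mul] at hx
        exact le_of_mul_le_mul_left (hx.trans hlevel) hT

lemma tendsto_exp_neg_mul_natCast {c : ℝ} (hc : 0 < c) :
    Filter.Tendsto (fun n : ℕ => exp (-(c * n))) atTop (nhds 0) :=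
  tendsto_exp_neg_atTop_nhds_zero.comp (tendsto_natCast_atTop_atTop.const_mul_atTop hc)

lemma exists_grid_eventually_isHittable {R η ρ p₀ : ℝ} (hR : 0 < R) (hη : 0 < η) (hρ : 0 < ρ)
    (hp₀ : 0 < p₀) :
    ∃ grid : Finset ℝ, (∀ q ∈ grid, 0 ≤ q ∧ q ≤ 2) ∧ ∀ᶠ n : ℕ in atTop, ∀ S : SpectralCov n,
      ∃ q ∈ grid, IsHittable S.cov q (n * (DDrc S.lam R + η))
        (1 / 2 * exp (-(n * (R * log 2 + ρ)))) p₀ := by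
  have : 0 < log 2 := log_pos one_lt_two
  set δ := min 1 (η * (R * log 2))
  have hδ : 0 < δ := by positivity
  set γ := min (δ / 2) (ρ * δ)
  have hγ : 0 < γ := by positivity
  have hγρ : γ / δ ≤ ρ := (div_le_iff₀ hδ).2 (min_le_right _ _)
  have hγδ : 2 * γ ≤ δ := by linarith [min_le_left (δ / 2) (ρ * δ)]
  obtain ⟨grid, hgrid_mem, hgrid⟩ := exists_finset_forall_mem_Icc_exists_le_add hδ
  refine ⟨grid, fun q hq => ⟨hδ.le.trans (hgrid_mem q hq).1,
    (hgrid_mem q hq).2.trans (by linarith [min_le_left 1 (η * (R * log 2))])⟩, ?_⟩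
  filter_upwards [Filter.eventually_gt_atTop 0,
    (tendsto_exp_neg_mul_natCast (show 0 < γ ^ 2 / 128 by positivity)).eventually_le_const
      (show (0 : ℝ) < 1 / 4 by norm_num),
    (tendsto_exp_neg_mul_natCast (show 0 < γ ^ 2 / 16 by positivity)).eventually_le_const
      (half_pos hp₀)] with n hn hexp htyp S
  obtain ⟨q, hq, hhit⟩ := S.exists_mem_grid_isHittable hn hR hγ hγδ (min_le_left _ _)
    (min_le_right _ _) hexp hgrid_mem hgrid
  refine ⟨q, hq, hhit.mono ?_ (by linarith)⟩
  gcongr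

end Gains

/-! ### Random codebooks -/

section RandomCodebook

open scoped ENNReal

lemma measure_pi_forall_notMem_le {E : Type*} [MeasurableSpace E] {Q : Measure E}
    [IsProbabilityMeasure Q] {H : Set E} (hH : MeasurableSet H) {p : ℝ} (hp : p ≤ Q.real H)
    (M : ℕ) :
    Measure.pi (fun _ : Fin M => Q) {x | ∀ j, x j ∉ H} ≤ ENNReal.ofReal (exp (-(p * M))) := by
  have hcompl : Q Hᶜ ≤ ENNReal.ofReal (exp (-p)) := by
    rw [← ofReal_measureReal, probReal_compl_eq_one_sub hH]
    exact ENNReal.ofReal_le_ofReal (by linarith [add_one_le_exp (-p)])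
  calc Measure.pi (fun _ : Fin M => Q) {x | ∀ j, x j ∉ H}
      = Measure.pi (fun _ : Fin M => Q) (Set.univ.pi fun _ => Hᶜ) := by congr 1; ext x; simp
    _ = Q Hᶜ ^ M := by rw [Measure.pi_pi, Finset.prod_const, Finset.card_univ, Fintype.card_fin]
    _ ≤ ENNReal.ofReal (exp (-p)) ^ M := by gcongr
    _ = _ := by
        rw [← ENNReal.ofReal_pow (exp_pos _).le, ← exp_nat_mul]
        ring_nf

variable {E : Type*} [MeasurableSpace E] {M : ℕ}

lemma measurableSet_forall_notMem {A : Set E} {G : Set (E × E)} (hA : MeasurableSet A)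
    (hG : MeasurableSet G) :
    MeasurableSet {z : (Fin M → E) × E | z.2 ∈ A ∧ ∀ j, (z.2, z.1 j) ∉ G} := by
  have hmiss : MeasurableSet (⋂ j, {z : (Fin M → E) × E | (z.2, z.1 j) ∉ G}) :=
    .iInter fun j => (show Measurable fun z : (Fin M → E) × E => (z.2, z.1 j) by fun_prop) hG.compl
  convert (measurable_snd hA).inter hmiss using 1
  ext z
  simp

lemma lintegral_measure_forall_notMem_le {Q : Measure E} [IsProbabilityMeasure Q] {A : Set E}
    {G : Set (E × E)} (hA : MeasurableSet A) (hG : MeasurableSet G) {p : ℝ}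
    (hp : ∀ w ∈ A, p ≤ Q.real {x | (w, x) ∈ G}) :
    ∫⁻ x, Q {w | w ∈ A ∧ ∀ j, (w, x j) ∉ G} ∂Measure.pi (fun _ : Fin M => Q) ≤
      ENNReal.ofReal (exp (-(p * M))) := by
  have hmeas := measurableSet_forall_notMem (M := M) hA hG
  calc ∫⁻ x, Q {w | w ∈ A ∧ ∀ j, (w, x j) ∉ G} ∂Measure.pi (fun _ : Fin M => Q)
      = ∫⁻ w, Measure.pi (fun _ : Fin M => Q) {x | w ∈ A ∧ ∀ j, (w, x j) ∉ G} ∂Q :=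
        (Measure.prod_apply hmeas).symm.trans (Measure.prod_apply_symm hmeas)
    _ ≤ ∫⁻ _, ENNReal.ofReal (exp (-(p * M))) ∂Q := lintegral_mono fun w => by
        by_cases hw : w ∈ A
        · simp only [hw, true_and]
          exact measure_pi_forall_notMem_le (measurable_prodMk_left hG) (hp w hw) M
        · simp [hw]
    _ = _ := by simp

lemma exists_forall_measure_forall_notMem_le (Q : Measure E) [IsProbabilityMeasure Q]
    {ι : Type*} [Fintype ι] {A : ι → Set E} {G : ι → Set (E × E)} (hA : ∀ k, MeasurableSet (A k))
    (hG : ∀ k, MeasurableSet (G k)) {p : ℝ}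
    (hp : ∀ k, ∀ w ∈ A k, p ≤ Q.real {x | (w, x) ∈ G k}) :
    ∃ x : Fin M → E, ∀ k, Q.real {w | w ∈ A k ∧ ∀ j, (w, x j) ∉ G k} ≤
      Fintype.card ι * exp (-(p * M)) := by
  have hmeas k : Measurable fun x : Fin M → E => Q {w | w ∈ A k ∧ ∀ j, (w, x j) ∉ G k} :=
    measurable_measure_prodMk_left (measurableSet_forall_notMem (hA k) (hG k))
  obtain ⟨x, hx⟩ := exists_le_lintegral (μ := Measure.pi fun _ : Fin M => Q)
    (Finset.measurable_sum Finset.univ fun k _ => hmeas k).aemeasurable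
  refine ⟨x, fun k => ENNReal.toReal_le_of_le_ofReal (by positivity) ?_⟩
  calc Q {w | w ∈ A k ∧ ∀ j, (w, x j) ∉ G k}
      ≤ ∑ k, Q {w | w ∈ A k ∧ ∀ j, (w, x j) ∉ G k} :=
        Finset.single_le_sum (f := fun k => Q {w | w ∈ A k ∧ ∀ j, (w, x j) ∉ G k})
          (fun _ _ => zero_le) (Finset.mem_univ k)
    _ ≤ ∑ k, ∫⁻ x, Q {w | w ∈ A k ∧ ∀ j, (w, x j) ∉ G k} ∂Measure.pi fun _ : Fin M => Q :=
        hx.trans_eq (lintegral_finsetSum _ fun k _ => hmeas k)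
    _ ≤ ∑ _k : ι, ENNReal.ofReal (exp (-(p * M))) :=
        Finset.sum_le_sum fun k _ => lintegral_measure_forall_notMem_le (hA k) (hG k) (hp k)
    _ = _ := by
        rw [Finset.sum_const, Finset.card_univ, nsmul_eq_mul,
          ENNReal.ofReal_mul (by positivity), ENNReal.ofReal_natCast]

end RandomCodebook

section GaussianCodebook

variable {n : ℕ}

lemma integrable_pow_gaussianReal (k : ℕ) : Integrable (fun x : ℝ => x ^ k) (gaussianReal 0 1) :=
  ((ProbabilityTheory.memLp_id_gaussianReal k).integrable_norm_pow' (p := k)).mono'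
    (by fun_prop) (ae_of_all _ fun x => by simp)

lemma integral_sq_gaussianReal : ∫ x, x ^ 2 ∂(gaussianReal 0 1) = 1 := by
  have h := ProbabilityTheory.variance_id_gaussianReal (μ := 0) (v := 1)
  rw [ProbabilityTheory.variance_of_integral_eq_zero aemeasurable_id (by simp)] at h
  simpa using h

lemma measurePreserving_eval_stdGaussian (i : Fin n) :
    MeasurePreserving (fun w : Fin n → ℝ => w i) (stdGaussian n) (gaussianReal 0 1) :=
  measurePreserving_eval (fun _ => gaussianReal 0 1) i

lemma integrable_sum_sq_stdGaussian :
    Integrable (fun w : Fin n → ℝ => ∑ i, w i ^ 2) (stdGaussian n) :=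
  integrable_finsetSum _ fun i _ =>
    (measurePreserving_eval_stdGaussian i).integrable_comp_of_integrable
      (integrable_pow_gaussianReal 2)

lemma integral_sum_sq_stdGaussian : ∫ w, ∑ i, w i ^ 2 ∂(stdGaussian n) = n := by
  have hcoord (i : Fin n) : ∫ w, w i ^ 2 ∂(stdGaussian n) = 1 := by
    rw [← integral_sq_gaussianReal, ← (measurePreserving_eval_stdGaussian i).map_eq,
      integral_map (measurable_pi_apply i).aemeasurable (by fun_prop)]
  have hint (i : Fin n) : Integrable (fun w : Fin n → ℝ => w i ^ 2) (stdGaussian n) :=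
    (measurePreserving_eval_stdGaussian i).integrable_comp_of_integrable
      (integrable_pow_gaussianReal 2)
  rw [integral_finsetSum _ fun i _ => hint i]
  simp [hcoord]

/-- The source vectors that no codeword of `C` of squared norm at most `B` describes with
distortion at most `b`. -/
def uncoveredSet (C : Finset (Fin n → ℝ)) (Sig : Matrix (Fin n) (Fin n) ℝ) (b B : ℝ) :
    Set (Fin n → ℝ) :=
  {w | ∀ v ∈ C, ∑ i, v i ^ 2 ≤ B → b < dSig Sig w v}

lemma measurableSet_uncoveredSet (C : Finset (Fin n → ℝ)) (Sig : Matrix (Fin n) (Fin n) ℝ)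
    (b B : ℝ) : MeasurableSet (uncoveredSet C Sig b B) := by
  have : uncoveredSet C Sig b B = ⋂ v ∈ C, ⋂ _ : ∑ i, v i ^ 2 ≤ B, {w | b < dSig Sig w v} := by
    ext w
    simp [uncoveredSet]
  rw [this]
  exact C.measurableSet_biInter fun v _ => .iInter fun _ =>
    measurableSet_lt measurable_const (by fun_prop)

/-- The pairs `(w, x)` for which the codeword `√q x` describes the source `w` with distortion at
most `b` while `x` has squared norm at most `B`. -/
def describingPairs (Sig : Matrix (Fin n) (Fin n) ℝ) (q b B : ℝ) :
    Set ((Fin n → ℝ) × (Fin n → ℝ)) :=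
  {z | dSig Sig z.1 (√q • z.2) ≤ b ∧ ∑ i, z.2 i ^ 2 ≤ B}

lemma measurableSet_describingPairs (Sig : Matrix (Fin n) (Fin n) ℝ) (q b B : ℝ) :
    MeasurableSet (describingPairs Sig q b B) := by
  have hdist : Measurable fun z : (Fin n → ℝ) × (Fin n → ℝ) => dSig Sig z.1 (√q • z.2) := by
    fun_prop
  have hnorm : Measurable fun z : (Fin n → ℝ) × (Fin n → ℝ) => ∑ i, z.2 i ^ 2 := by fun_prop
  exact (measurableSet_le hdist measurable_const).inter (measurableSet_le hnorm measurable_const)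

lemma real_le_sum_sq_stdGaussian_le (hn : 0 < n) {p : ℝ} (hp : 0 < p) :
    (stdGaussian n).real {x | n / p ≤ ∑ i, x i ^ 2} ≤ p := by
  have h := mul_meas_ge_le_integral_of_nonneg (μ := stdGaussian n)
    (ae_of_all _ fun x => Finset.sum_nonneg fun i _ => sq_nonneg (x i))
    integrable_sum_sq_stdGaussian (n / p)
  rw [integral_sum_sq_stdGaussian, div_mul_eq_mul_div, div_le_iff₀ hp] at h
  exact le_of_mul_le_mul_left h (by positivity)

lemma le_real_mem_describingPairs (hn : 0 < n) {Sig : Matrix (Fin n) (Fin n) ℝ} {w : Fin n → ℝ}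
    {q b p : ℝ} (hp : 0 < p) (hit : 2 * p ≤ (stdGaussian n).real {x | dSig Sig w (√q • x) ≤ b}) :
    p ≤ (stdGaussian n).real {x | (w, x) ∈ describingPairs Sig q b (n / p)} := by
  have hsub : {x | dSig Sig w (√q • x) ≤ b} ⊆
      {x | (w, x) ∈ describingPairs Sig q b (n / p)} ∪ {x | n / p ≤ ∑ i, x i ^ 2} :=
    fun x hx => (le_total (∑ i, x i ^ 2) (n / p)).imp (⟨hx, ·⟩) id
  linarith [(measureReal_mono hsub).trans (measureReal_union_le (μ := stdGaussian n) _ _),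
    real_le_sum_sq_stdGaussian_le hn hp]

lemma exists_codebook_real_uncoveredSet_le (hn : 0 < n) {ι : Type*} [Fintype ι] {grid : Finset ℝ}
    (hgrid : ∀ q ∈ grid, 0 ≤ q ∧ q ≤ 2) {Sig : ι → Matrix (Fin n) (Fin n) ℝ} {q b : ι → ℝ}
    (hq : ∀ k, q k ∈ grid) {p p₀ : ℝ} (hp : 0 < p)
    (hit : ∀ k, IsHittable (Sig k) (q k) (b k) (2 * p) p₀) {M : ℕ}
    (hM : Fintype.card ι * exp (-(p * M)) ≤ p₀) :
    ∃ C : Finset (Fin n → ℝ), C.card ≤ grid.card * M ∧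
      ∀ k, (stdGaussian n).real (uncoveredSet C (Sig k) (b k) (2 * (n / p))) ≤ 2 * p₀ := by
  choose A hA hAp₀ hAp using hit
  obtain ⟨x, hx⟩ := exists_forall_measure_forall_notMem_le (M := M) (stdGaussian n) hA
    (fun k => measurableSet_describingPairs (Sig k) (q k) (b k) (n / p))
    fun k w hw => le_real_mem_describingPairs hn hp (hAp k w hw)
  set C := (grid ×ˢ Finset.univ).image fun z => √z.1 • x z.2
  have hsub k : uncoveredSet C (Sig k) (b k) (2 * (n / p)) ⊆ (A k)ᶜ ∪
      {w | w ∈ A k ∧ ∀ j, (w, x j) ∉ describingPairs (Sig k) (q k) (b k) (n / p)} := by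
    intro w hw
    by_cases hwA : w ∈ A k
    · refine Or.inr ⟨hwA, fun j hj => (hw _ (Finset.mem_image_of_mem _ (Finset.mk_mem_product
        (hq k) (Finset.mem_univ j))) ?_).not_ge hj.1⟩
      simp only [Pi.smul_apply, smul_eq_mul, mul_pow, sq_sqrt (hgrid _ (hq k)).1,
        ← Finset.mul_sum]
      exact mul_le_mul (hgrid _ (hq k)).2 hj.2 (Finset.sum_nonneg fun i _ => sq_nonneg _) two_pos.le
    · exact Or.inl hwA
  refine ⟨C, Finset.card_image_le.trans_eq (by simp), fun k => ?_⟩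
  linarith [(measureReal_mono (hsub k)).trans (measureReal_union_le (μ := stdGaussian n) _ _),
    hAp₀ k, hx k]

end GaussianCodebook

/-! ### Nets and perturbations of covariances -/

section Net

lemma floor_div_mem_Icc {x b : ℝ} (hb : 0 < b) (hx : |x| ≤ b) {m : ℕ} (hm : 0 < m) :
    ⌊x / (b / m)⌋ ∈ Finset.Icc (-(m : ℤ)) m := by
  have hscale : |x / (b / m)| ≤ m := by
    rwa [abs_div, abs_of_pos (by positivity : 0 < b / m), div_le_iff₀ (by positivity),
      mul_div_cancel₀ _ (by positivity)]
  rw [abs_le] at hscale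
  exact Finset.mem_Icc.2 ⟨Int.le_floor.2 (by exact_mod_cast hscale.1),
    by exact_mod_cast (Int.floor_le _).trans hscale.2⟩

lemma abs_sub_le_of_floor_div_eq {x y c : ℝ} (hc : 0 < c) (h : ⌊x / c⌋ = ⌊y / c⌋) :
    |x - y| ≤ c := by
  have hlt := (Int.abs_sub_lt_one_of_floor_eq_floor h).le
  rwa [← sub_div, abs_div, abs_of_pos hc, div_le_one hc] at hlt

lemma exists_forall_le_add_of_bddBelow {α κ : Type*} {D : α → ℝ} (hD : BddBelow (Set.range D))
    {η : ℝ} (hη : 0 < η) (cell : α → κ) (a₀ : α) :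
    ∃ a', cell a' = cell a₀ ∧ ∀ a, cell a = cell a₀ → D a' ≤ D a + η := by
  have hbdd : BddBelow (D '' {a | cell a = cell a₀}) := hD.mono (Set.image_subset_range _ _)
  obtain ⟨_, ⟨a', ha', rfl⟩, hlt⟩ := exists_lt_of_csInf_lt
    (show (D '' {a | cell a = cell a₀}).Nonempty from ⟨_, a₀, rfl, rfl⟩)
    (lt_add_of_pos_right _ hη)
  refine ⟨a', ha', fun a ha => ?_⟩
  linarith [csInf_le hbdd ⟨a, ha, rfl⟩]

/-- Rounding `φ` to multiples of `b / m` partitions `α` into `(2m + 1) ^ card ι` cells, and each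
nonempty cell is represented by a near-minimizer of `D`. -/
lemma exists_finset_net {α ι : Type*} [Fintype ι] {φ : α → ι → ℝ} {b : ℝ} (hb : 0 < b)
    (hφ : ∀ a i, |φ a i| ≤ b) {D : α → ℝ} (hD : BddBelow (Set.range D)) {η : ℝ} (hη : 0 < η)
    {m : ℕ} (hm : 0 < m) :
    ∃ N : Finset α, N.card ≤ (2 * m + 1) ^ Fintype.card ι ∧
      ∀ a, ∃ a' ∈ N, (∀ i, |φ a' i - φ a i| ≤ b / m) ∧ D a' ≤ D a + η := by
  classical
  let cell (a : α) (i : ι) : ℤ := ⌊φ a i / (b / m)⌋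
  have hcell : ∀ a, cell a ∈ Fintype.piFinset fun _ => Finset.Icc (-(m : ℤ)) m := fun a =>
    Fintype.mem_piFinset.2 fun i => floor_div_mem_Icc hb (hφ a i) hm
  have hrep : ∀ c : Set.range cell, ∃ a', cell a' = c ∧ ∀ a, cell a = c → D a' ≤ D a + η :=
    fun ⟨_, a₀, rfl⟩ => exists_forall_le_add_of_bddBelow hD hη cell a₀
  choose rep hrep_cell hrep_le using hrep
  have hrange : Set.range cell ⊆ ↑(Fintype.piFinset fun _ : ι => Finset.Icc (-(m : ℤ)) m) :=
    Set.range_subset_iff.2 hcell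
  have : Fintype (Set.range cell) := (Set.Finite.subset (Finset.finite_toSet _) hrange).fintype
  refine ⟨Finset.univ.image rep, ?_, fun a => ⟨_, Finset.mem_image_of_mem rep
    (Finset.mem_univ ⟨cell a, a, rfl⟩), fun i => abs_sub_le_of_floor_div_eq (by positivity)
    (congrFun (hrep_cell ⟨cell a, a, rfl⟩) i), hrep_le _ a rfl⟩⟩
  calc (Finset.univ.image rep).card ≤ (Set.range cell).toFinset.card :=
        Finset.card_image_le.trans_eq (by simp)
    _ ≤ (Fintype.piFinset fun _ : ι => Finset.Icc (-(m : ℤ)) m).card :=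
        Finset.card_le_card (Set.toFinset_subset.2 hrange)
    _ = _ := by
        rw [Fintype.card_piFinset, Finset.prod_const, Finset.card_univ, Int.card_Icc]
        congr 1
        omega

variable {n : ℕ}

lemma SpectralCov.abs_cov_apply_le (S : SpectralCov n) (i j : Fin n) : |S.cov i j| ≤ n := by
  have hU : S.U ∈ unitaryGroup (Fin n) ℝ := by
    rw [mem_unitaryGroup_iff, star_eq_conjTranspose, conjTranspose_eq_transpose_of_trivial]
    exact S.mul_transpose
  have hentry : S.cov i j = ∑ k, S.lam k * (S.U i k * S.U j k) := by
    rw [cov, mul_apply]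
    exact Finset.sum_congr rfl fun k _ => by rw [mul_diagonal, transpose_apply]; ring
  rw [hentry, ← S.sum_lam]
  refine (Finset.abs_sum_le_sum_abs _ _).trans (Finset.sum_le_sum fun k _ => ?_)
  rw [abs_mul, abs_mul, abs_of_nonneg (S.lam_nonneg k)]
  exact mul_le_of_le_one_right (S.lam_nonneg k)
    (mul_le_one₀ (entry_norm_bound_of_unitary hU i k) (abs_nonneg _)
      (entry_norm_bound_of_unitary hU j k))

lemma SpectralCov.exists_finset_net (hn : 0 < n) {R η : ℝ} (hR : 0 < R) (hη : 0 < η) {m : ℕ}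
    (hm : 0 < m) :
    ∃ N : Finset (SpectralCov n), N.card ≤ (2 * m + 1) ^ (n * n) ∧ ∀ S : SpectralCov n,
      ∃ S' ∈ N, (∀ i j, |S'.cov i j - S.cov i j| ≤ n / m) ∧ DDrc S'.lam R ≤ DDrc S.lam R + η := by
  obtain ⟨N, hcard, hN⟩ := RandomCoding.exists_finset_net
    (φ := fun (S : SpectralCov n) (e : Fin n × Fin n) => S.cov e.1 e.2)
    (show (0 : ℝ) < n by positivity) (fun S e => S.abs_cov_apply_le e.1 e.2)
    ⟨0, Set.forall_mem_range.2 fun S => S.DDrc_nonneg hn hR⟩ hη hm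
  refine ⟨N, by simpa using hcard, fun S => ?_⟩
  obtain ⟨S', hS', hent, hD⟩ := hN S
  exact ⟨S', hS', fun i j => hent (i, j), hD⟩

lemma sum_sum_mul_sq_add_sq_div_two (d : ℝ) (y : Fin n → ℝ) :
    ∑ i, ∑ j, d * ((y i ^ 2 + y j ^ 2) / 2) = d * n * ∑ i, y i ^ 2 := by
  simp only [← Finset.mul_sum, ← Finset.sum_div, Finset.sum_add_distrib, Finset.sum_const,
    Finset.card_univ, Fintype.card_fin, nsmul_eq_mul]
  ring

lemma dSig_eq_sum_sum (Sig : Matrix (Fin n) (Fin n) ℝ) (w v : Fin n → ℝ) :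
    dSig Sig w v = ∑ i, ∑ j, Sig i j * ((w i - v i) * (w j - v j)) := by
  simp only [dSig, dotProduct, mulVec, Finset.mul_sum, Pi.sub_apply]
  exact Finset.sum_congr rfl fun i _ => Finset.sum_congr rfl fun j _ => by ring

lemma abs_dSig_sub_dSig_le {Sig Sig' : Matrix (Fin n) (Fin n) ℝ} {d : ℝ}
    (h : ∀ i j, |Sig i j - Sig' i j| ≤ d) (w v : Fin n → ℝ) :
    |dSig Sig w v - dSig Sig' w v| ≤ d * n * ∑ i, (w i - v i) ^ 2 := by
  rw [dSig_eq_sum_sum, dSig_eq_sum_sum, ← sum_sum_mul_sq_add_sq_div_two d fun i => w i - v i]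
  simp only [← Finset.sum_sub_distrib, ← sub_mul]
  refine (Finset.abs_sum_le_sum_abs _ _).trans (Finset.sum_le_sum fun i _ =>
    (Finset.abs_sum_le_sum_abs _ _).trans (Finset.sum_le_sum fun j _ => ?_))
  rw [abs_mul]
  refine mul_le_mul (h i j) ?_ (abs_nonneg _) ((abs_nonneg _).trans (h i j))
  rw [abs_le]
  constructor <;> nlinarith [sq_nonneg (w i - v i + (w j - v j)),
    sq_nonneg (w i - v i - (w j - v j))]

lemma abs_dSig_sub_dSig_le_add {Sig Sig' : Matrix (Fin n) (Fin n) ℝ} {d : ℝ} (hd : 0 ≤ d)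
    (h : ∀ i j, |Sig i j - Sig' i j| ≤ d) (w v : Fin n → ℝ) :
    |dSig Sig w v - dSig Sig' w v| ≤ 2 * d * n * (∑ i, w i ^ 2 + ∑ i, v i ^ 2) := by
  have hsq : ∑ i, (w i - v i) ^ 2 ≤ 2 * (∑ i, w i ^ 2 + ∑ i, v i ^ 2) := by
    rw [← Finset.sum_add_distrib, Finset.mul_sum]
    exact Finset.sum_le_sum fun i _ => by nlinarith [sq_nonneg (w i + v i)]
  calc |dSig Sig w v - dSig Sig' w v| ≤ d * n * ∑ i, (w i - v i) ^ 2 := abs_dSig_sub_dSig_le h w v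
    _ ≤ d * n * (2 * (∑ i, w i ^ 2 + ∑ i, v i ^ 2)) := by gcongr
    _ = _ := by ring

end Net

/-! ### Uniform integrability of the distortion -/

section UniformIntegrability

lemma setIntegral_le_mul_measureReal_add_integral_sq_div {α : Type*} [MeasurableSpace α]
    {μ : Measure α} [IsFiniteMeasure μ] {f : α → ℝ} (hf : Integrable f μ)
    (hf2 : Integrable (fun a => f a ^ 2) μ) {K : ℝ} (hK : 0 < K) (E : Set α) :
    ∫ a in E, f a ∂μ ≤ K * μ.real E + (∫ a, f a ^ 2 ∂μ) / K := by
  have hpt : ∀ a, f a ≤ K + f a ^ 2 / K := fun a => by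
    rw [← sub_le_iff_le_add', le_div_iff₀ hK]
    nlinarith [sq_nonneg (f a - K), sq_nonneg (f a)]
  have hf2K := hf2.div_const K
  calc ∫ a in E, f a ∂μ ≤ ∫ a in E, (K + f a ^ 2 / K) ∂μ :=
        integral_mono hf.integrableOn ((integrable_const K).add hf2K.integrableOn) hpt
    _ = K * μ.real E + ∫ a in E, f a ^ 2 / K ∂μ := by
        rw [integral_add (integrable_const K) hf2K.integrableOn, setIntegral_const, smul_eq_mul,
          mul_comm]
    _ ≤ K * μ.real E + ∫ a, f a ^ 2 / K ∂μ := by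
        linarith [setIntegral_le_integral (s := E) hf2K (ae_of_all _ fun a => by positivity)]
    _ = _ := by rw [integral_div]

variable {n : ℕ}

lemma setIntegral_sq_le_of_measurePreserving {y : (Fin n → ℝ) → ℝ}
    (hy : MeasurePreserving y (stdGaussian n) (gaussianReal 0 1)) {K : ℝ} (hK : 0 < K)
    (E : Set (Fin n → ℝ)) :
    ∫ w in E, y w ^ 2 ∂(stdGaussian n) ≤
      K * (stdGaussian n).real E + (∫ x, x ^ 4 ∂(gaussianReal 0 1)) / K := by
  have hint k : Integrable (fun w => y w ^ k) (stdGaussian n) :=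
    hy.integrable_comp_of_integrable (integrable_pow_gaussianReal k)
  have hfour : ∫ x, x ^ 4 ∂(gaussianReal 0 1) = ∫ w, (y w ^ 2) ^ 2 ∂(stdGaussian n) := by
    rw [← hy.map_eq, integral_map hy.aemeasurable (by fun_prop)]
    simp only [← pow_mul]
  rw [hfour]
  exact setIntegral_le_mul_measureReal_add_integral_sq_div (hint 2)
    (by simpa only [← pow_mul] using hint 4) hK E

namespace SpectralCov

lemma dSig_cov (S : SpectralCov n) (w v : Fin n → ℝ) :
    dSig S.cov w v = ∑ i, S.lam i * ((S.Uᵀ *ᵥ w) i - (S.Uᵀ *ᵥ v) i) ^ 2 := by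
  rw [cov, dSig_mul_mul_transpose, dSig_diagonal]

lemma dSig_cov_nonneg (S : SpectralCov n) (w v : Fin n → ℝ) : 0 ≤ dSig S.cov w v := by
  rw [dSig_cov]
  exact Finset.sum_nonneg fun i _ => mul_nonneg (S.lam_nonneg i) (sq_nonneg _)

lemma measurePreserving_transpose_mulVec_apply (S : SpectralCov n) (i : Fin n) :
    MeasurePreserving (fun w => (S.Uᵀ *ᵥ w) i) (stdGaussian n) (gaussianReal 0 1) :=
  (measurePreserving_eval_stdGaussian i).comp (measurePreserving_transpose_mulVec S.mul_transpose)

lemma dSig_cov_zero (S : SpectralCov n) (w : Fin n → ℝ) :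
    dSig S.cov w 0 = ∑ i, S.lam i * (S.Uᵀ *ᵥ w) i ^ 2 := by
  simp [dSig_cov]

lemma integrable_mul_transpose_mulVec_sq (S : SpectralCov n) (i : Fin n) :
    Integrable (fun w => S.lam i * (S.Uᵀ *ᵥ w) i ^ 2) (stdGaussian n) :=
  ((S.measurePreserving_transpose_mulVec_apply i).integrable_comp_of_integrable
    (integrable_pow_gaussianReal 2)).const_mul _

lemma integrable_dSig_cov_zero (S : SpectralCov n) :
    Integrable (fun w => dSig S.cov w 0) (stdGaussian n) := by
  simp only [dSig_cov_zero]
  exact integrable_finsetSum _ fun i _ => S.integrable_mul_transpose_mulVec_sq i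

lemma setIntegral_dSig_cov_zero_le (S : SpectralCov n) {K : ℝ} (hK : 0 < K)
    (E : Set (Fin n → ℝ)) :
    ∫ w in E, dSig S.cov w 0 ∂(stdGaussian n) ≤
      n * (K * (stdGaussian n).real E + (∫ x, x ^ 4 ∂(gaussianReal 0 1)) / K) := by
  simp only [dSig_cov_zero]
  rw [integral_finsetSum _ fun i _ => (S.integrable_mul_transpose_mulVec_sq i).integrableOn,
    ← S.sum_lam, Finset.sum_mul]
  refine Finset.sum_le_sum fun i _ => ?_
  rw [integral_const_mul]
  exact mul_le_mul_of_nonneg_left (setIntegral_sq_le_of_measurePreserving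
    (S.measurePreserving_transpose_mulVec_apply i) hK E) (S.lam_nonneg i)

lemma exists_pos_forall_setIntegral_dSig_cov_zero_le {η : ℝ} (hη : 0 < η) :
    ∃ p > 0, ∀ (n : ℕ) (S : SpectralCov n) (E : Set (Fin n → ℝ)), (stdGaussian n).real E ≤ p →
      ∫ w in E, dSig S.cov w 0 ∂(stdGaussian n) ≤ n * η := by
  have hm4 : 0 ≤ ∫ x, x ^ 4 ∂(gaussianReal 0 1) := integral_nonneg fun x => by positivity
  set m4 := ∫ x, x ^ 4 ∂(gaussianReal 0 1)
  set K := 2 * (m4 + 1) / η with hK_def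
  have hK : 0 < K := by positivity
  refine ⟨η / (2 * K), by positivity, fun n S E hE =>
    (S.setIntegral_dSig_cov_zero_le hK E).trans (mul_le_mul_of_nonneg_left ?_ n.cast_nonneg)⟩
  have hmass : K * (stdGaussian n).real E ≤ η / 2 := by
    rw [le_div_iff₀ (by positivity)] at hE
    linarith
  have htail : m4 / K ≤ η / 2 := by
    rw [div_le_iff₀ hK, hK_def]
    field_simp
    linarith
  linarith

end SpectralCov

end UniformIntegrability

/-! ### Universal codebooks -/

section UniversalCodebook

variable {n : ℕ}

lemma exists_nearest_codeword {C : Finset (Fin n → ℝ)} (hC : C.Nonempty) :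
    ∃ f : (Fin n → ℝ) → Matrix (Fin n) (Fin n) ℝ → Fin n → ℝ,
      ∀ w Sig, f w Sig ∈ C ∧ ∀ v ∈ C, dSig Sig w (f w Sig) ≤ dSig Sig w v := by
  choose f hfC hf using fun w Sig => C.exists_min_image (dSig Sig w) hC
  exact ⟨f, fun w Sig => ⟨hfC w Sig, hf w Sig⟩⟩

lemma dSig_le_of_notMem_uncoveredSet {C : Finset (Fin n → ℝ)} {Sig Sig' : Matrix (Fin n) (Fin n) ℝ}
    {d b B : ℝ} (hd : 0 ≤ d) (hSig : ∀ i j, |Sig i j - Sig' i j| ≤ d) {w v : Fin n → ℝ}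
    (hv : ∀ v' ∈ C, dSig Sig' w v ≤ dSig Sig' w v') (hw : w ∉ uncoveredSet C Sig b B) :
    dSig Sig' w v ≤ b + 2 * d * n * (∑ i, w i ^ 2 + B) := by
  simp only [uncoveredSet, Set.mem_ofPred_eq, not_forall, not_lt] at hw
  obtain ⟨v', hv'C, hv'B, hv'b⟩ := hw
  calc dSig Sig' w v ≤ dSig Sig' w v' := hv v' hv'C
    _ ≤ dSig Sig w v' + 2 * d * n * (∑ i, w i ^ 2 + ∑ i, v' i ^ 2) := by
        linarith [neg_le_of_abs_le (abs_dSig_sub_dSig_le_add hd hSig w v')]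
    _ ≤ _ := by gcongr

lemma integrable_add_mul_sum_sq_add (b c B : ℝ) :
    Integrable (fun w : Fin n → ℝ => b + c * (∑ i, w i ^ 2 + B)) (stdGaussian n) :=
  (integrable_const b).add ((integrable_sum_sq_stdGaussian.add (integrable_const B)).const_mul c)

lemma integral_add_mul_sum_sq_add (b c B : ℝ) :
    ∫ w : Fin n → ℝ, (b + c * (∑ i, w i ^ 2 + B)) ∂(stdGaussian n) = b + c * (n + B) := by
  have hsum : Integrable (fun w : Fin n → ℝ => ∑ i, w i ^ 2 + B) (stdGaussian n) :=
    integrable_sum_sq_stdGaussian.add (integrable_const B)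
  rw [integral_add (integrable_const b) (hsum.const_mul c), integral_const_mul,
    integral_add integrable_sum_sq_stdGaussian (integrable_const B), integral_sum_sq_stdGaussian]
  simp

/-- The minimal distortion `dSig S.cov w (g w)` is a measurable function of `w`, whether or not the
choice `g` of a nearest codeword is. -/
lemma SpectralCov.integral_dSig_le (S : SpectralCov n) {Sig : Matrix (Fin n) (Fin n) ℝ}
    {C : Finset (Fin n → ℝ)} {g : (Fin n → ℝ) → Fin n → ℝ}
    (hg : ∀ w, ∀ v ∈ insert 0 C, dSig S.cov w (g w) ≤ dSig S.cov w v) {d b B : ℝ} (hd : 0 ≤ d)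
    (hSig : ∀ i j, |Sig i j - S.cov i j| ≤ d) (hb : 0 ≤ b) (hB : 0 ≤ B) :
    ∫ w, dSig S.cov w (g w) ∂(stdGaussian n) ≤ b + 2 * d * n * (n + B) +
      ∫ w in uncoveredSet C Sig b B, dSig S.cov w 0 ∂(stdGaussian n) := by
  set E := uncoveredSet C Sig b B
  have hEm : MeasurableSet E := measurableSet_uncoveredSet C Sig b B
  have hind : Integrable (E.indicator fun w => dSig S.cov w 0) (stdGaussian n) :=
    S.integrable_dSig_cov_zero.indicator hEm
  have hquad := integrable_add_mul_sum_sq_add (n := n) b (2 * d * n) B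
  calc ∫ w, dSig S.cov w (g w) ∂(stdGaussian n)
      ≤ ∫ w, (b + 2 * d * n * (∑ i, w i ^ 2 + B) + E.indicator (fun w => dSig S.cov w 0) w)
          ∂(stdGaussian n) := by
        refine integral_mono_of_nonneg (ae_of_all _ fun w => S.dSig_cov_nonneg _ _)
          (hquad.add hind) (ae_of_all _ fun w => ?_)
        by_cases hw : w ∈ E
        · have : 0 ≤ 2 * d * n * (∑ i, w i ^ 2 + B) := by positivity
          simp only [Set.indicator_of_mem hw]
          linarith [hg w 0 (Finset.mem_insert_self _ _)]
        · simp only [Set.indicator_of_notMem hw, add_zero]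
          exact dSig_le_of_notMem_uncoveredSet hd hSig
            (fun v hv => hg w v (Finset.mem_insert_of_mem hv)) hw
    _ = _ := by
        rw [integral_add hquad hind, integral_indicator hEm, integral_add_mul_sum_sq_add]

lemma exists_codebook_forall_integral_dSig_le (hn : 0 < n) {R η p p₀ : ℝ} (hR : 0 < R) (hη : 0 < η)
    (hp : 0 < p) {grid : Finset ℝ} (hgrid : ∀ q ∈ grid, 0 ≤ q ∧ q ≤ 2)
    (hit : ∀ S : SpectralCov n, ∃ q ∈ grid,
      IsHittable S.cov q (n * (DDrc S.lam R + η)) (2 * p) p₀)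
    (hui : ∀ (S : SpectralCov n) (E : Set (Fin n → ℝ)), (stdGaussian n).real E ≤ 2 * p₀ →
      ∫ w in E, dSig S.cov w 0 ∂(stdGaussian n) ≤ n * η)
    {m M : ℕ} (hm : 0 < m) (hM : (2 * m + 1) ^ (n * n) * exp (-(p * M)) ≤ p₀)
    (hprec : 2 * (n / m) * (n + 2 * (n / p)) ≤ η) :
    ∃ (C : Finset (Fin n → ℝ)) (f : (Fin n → ℝ) → Matrix (Fin n) (Fin n) ℝ → Fin n → ℝ),
      C.Nonempty ∧ C.card ≤ grid.card * M + 1 ∧ (∀ w Sig, f w Sig ∈ C) ∧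
      ∀ S : SpectralCov n, ∫ w, dSig S.cov w (f w S.cov) ∂(stdGaussian n) ≤
        n * (DDrc S.lam R + 4 * η) := by
  obtain ⟨N, hNcard, hN⟩ := SpectralCov.exists_finset_net hn hR hη hm
  choose q hq hhit using hit
  obtain ⟨C, hCcard, hC⟩ := exists_codebook_real_uncoveredSet_le hn hgrid
    (fun S : N => hq S) hp (fun S : N => hhit S) (M := M) <| by
      rw [Fintype.card_coe]
      refine (mul_le_mul_of_nonneg_right ?_ (exp_pos _).le).trans hM
      exact_mod_cast hNcard
  obtain ⟨f, hf⟩ := exists_nearest_codeword (C.insert_nonempty 0)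
  refine ⟨insert 0 C, f, C.insert_nonempty 0, (C.card_insert_le 0).trans (by gcongr),
    fun w Sig => (hf w Sig).1, fun S => ?_⟩
  obtain ⟨S', hS'N, hent, hD⟩ := hN S
  calc _ ≤ _ := S.integral_dSig_le (fun w => (hf w S.cov).2) (B := 2 * (n / p)) (by positivity)
        hent (mul_nonneg n.cast_nonneg (add_nonneg (S'.DDrc_nonneg hn hR) hη.le)) (by positivity)
    _ ≤ n * (DDrc S.lam R + η + η) + n * η + n * η := by
        refine add_le_add (add_le_add (by gcongr) ?_) (hui S _ (hC ⟨S', hS'N⟩))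
        rw [mul_right_comm, mul_comm _ (n : ℝ)]
        gcongr
    _ = _ := by ring

end UniversalCodebook

/-! ### Asymptotic choice of the parameters -/

section Asymptotics

/-- The number of codewords of a codebook of rate `r` nats in dimension `n`. -/
noncomputable def codebookSize (r : ℝ) (n : ℕ) : ℕ := ⌈exp (n * r)⌉₊

variable {r s : ℝ}

lemma exp_le_codebookSize (r : ℝ) (n : ℕ) : exp (n * r) ≤ codebookSize r n := Nat.le_ceil _

lemma codebookSize_pos (r : ℝ) (n : ℕ) : 0 < codebookSize r n := Nat.ceil_pos.2 (exp_pos _)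

lemma codebookSize_le_two_mul_exp (hr : 0 ≤ r) (n : ℕ) : codebookSize r n ≤ 2 * exp (n * r) := by
  have : 1 ≤ exp (n * r) := one_le_exp (by positivity)
  have := Nat.ceil_lt_add_one (exp_pos (n * r)).le
  unfold codebookSize
  linarith

lemma eventually_mul_pow_le_exp (k : ℕ) {a c : ℝ} (ha : 0 < a) (hc : 0 < c) :
    ∀ᶠ n : ℕ in atTop, a * (n : ℝ) ^ k ≤ exp (n * c) := by
  filter_upwards [tendsto_natCast_atTop_atTop.eventually
    ((isLittleO_pow_exp_pos_mul_atTop (k := k) hc).bound (inv_pos.2 ha))] with n hn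
  rw [norm_of_nonneg (by positivity), norm_of_nonneg (exp_pos _).le, ← div_eq_inv_mul,
    le_div_iff₀ ha] at hn
  rwa [mul_comm a, mul_comm (n : ℝ)]

lemma eventually_mul_codebookSize_add_one_le (hr : 0 ≤ r) (hrs : r < s) (a : ℕ) :
    ∀ᶠ n : ℕ in atTop, (a * codebookSize r n + 1 : ℝ) ≤ exp (n * s) := by
  filter_upwards [eventually_mul_pow_le_exp 0 (show (0 : ℝ) < 2 * a + 1 by positivity)
    (sub_pos.2 hrs)] with n hn
  have : 1 ≤ exp (n * r) := one_le_exp (by positivity)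
  have hsplit : exp (n * s) = exp (n * (s - r)) * exp (n * r) := by rw [← exp_add]; ring_nf
  rw [pow_zero, mul_one] at hn
  calc (a * codebookSize r n + 1 : ℝ) ≤ a * (2 * exp (n * r)) + exp (n * r) := by
        gcongr
        exact codebookSize_le_two_mul_exp hr n
    _ = (2 * a + 1) * exp (n * r) := by ring
    _ ≤ exp (n * s) := by rw [hsplit]; gcongr

/-- The net grows like `exp (O(n³))`, which the doubly exponential miss probability absorbs. -/
lemma eventually_net_mul_miss_le (hs : 0 ≤ s) (hrs : r < s) {p₀ : ℝ} (hp₀ : 0 < p₀) :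
    ∀ᶠ n : ℕ in atTop, (2 * codebookSize s n + 1 : ℝ) ^ (n * n) *
      exp (-(1 / 4 * exp (-(n * r)) * codebookSize s n)) ≤ p₀ := by
  filter_upwards [Filter.eventually_ge_atTop 1,
    (tendsto_exp_neg_mul_natCast one_pos).eventually_le_const hp₀,
    eventually_mul_codebookSize_add_one_le hs (lt_add_one s) 2,
    eventually_mul_pow_le_exp 3 (show 0 < 4 * (s + 2) by positivity) (sub_pos.2 hrs)]
    with n hn hexp hnet hcube
  have hmiss : exp (n * (s - r)) ≤ exp (-(n * r)) * codebookSize s n := by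
    rw [mul_sub, sub_eq_neg_add, exp_add]
    gcongr
    exact exp_le_codebookSize s n
  have hn3 : (n : ℝ) ≤ n ^ 3 := le_self_pow₀ (by exact_mod_cast hn) (by norm_num)
  push_cast at hnet
  calc _ ≤ exp (n * (s + 1)) ^ (n * n) *
        exp (-(1 / 4 * exp (-(n * r)) * codebookSize s n)) := by gcongr
    _ ≤ exp (-(1 * n)) := by
        rw [← exp_nat_mul, ← exp_add, exp_le_exp]
        push_cast
        linarith
    _ ≤ p₀ := hexp

lemma eventually_precision_le (hr : 0 ≤ r) (hrs : r < s) {η : ℝ} (hη : 0 < η) :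
    ∀ᶠ n : ℕ in atTop, (2 * (n / codebookSize s n) * (n + 2 * (n / (1 / 4 * exp (-(n * r))))) : ℝ)
      ≤ η := by
  filter_upwards [eventually_mul_pow_le_exp 2 (show 0 < 18 / η by positivity) (sub_pos.2 hrs)]
    with n hn
  have : 1 ≤ exp (n * r) := one_le_exp (by positivity)
  have hM : (0 : ℝ) < codebookSize s n := by exact_mod_cast codebookSize_pos s n
  rw [div_mul_eq_mul_div, div_le_iff₀ hη] at hn
  rw [exp_neg, mul_div_assoc', div_mul_eq_mul_div, div_le_iff₀ hM]
  calc 2 * n * (n + 2 * (n / (1 / 4 * (exp (n * r))⁻¹)))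
      = 2 * n ^ 2 + 16 * n ^ 2 * exp (n * r) := by field_simp; ring
    _ ≤ 18 * n ^ 2 * exp (n * r) := by nlinarith [sq_nonneg (n : ℝ)]
    _ ≤ exp (n * (s - r)) * η * exp (n * r) := by gcongr
    _ = η * exp (n * s) := by rw [mul_right_comm, ← exp_add]; ring_nf
    _ ≤ η * codebookSize s n := by gcongr; exact exp_le_codebookSize s n

lemma logb_two_le_of_le_exp {x a : ℝ} (hx : 0 < x) (h : x ≤ exp (a * log 2)) : logb 2 x ≤ a := by
  rw [logb_le_iff_le_rpow one_lt_two hx, rpow_def_of_pos two_pos, mul_comm]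
  exact h

lemma eventually_exists_universal_codebook {R ε η : ℝ} (hR : 0 < R) (hε : 0 < ε) (hη : 0 < η) :
    ∀ᶠ n : ℕ in atTop, ∃ (C : Finset (Fin n → ℝ))
      (f : (Fin n → ℝ) → Matrix (Fin n) (Fin n) ℝ → Fin n → ℝ),
      C.Nonempty ∧ logb 2 C.card ≤ n * (R + ε) ∧ (∀ w Sig, f w Sig ∈ C) ∧
      ∀ S : SpectralCov n, ∫ w, dSig S.cov w (f w S.cov) ∂(stdGaussian n) ≤
        n * (DDrc S.lam R + η) := by
  have : 0 < log 2 := log_pos one_lt_two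
  set ρ := ε * log 2 / 3 with hρ_def
  have hρ : 0 < ρ := by positivity
  set r := R * log 2 + ρ
  have hr : 0 < r := by positivity
  set s := r + ρ
  have hrs : r < s := lt_add_of_pos_right r hρ
  obtain ⟨p₀, hp₀, hui⟩ := SpectralCov.exists_pos_forall_setIntegral_dSig_cov_zero_le
    (show 0 < η / 4 by positivity)
  obtain ⟨grid, hgrid, hhit⟩ := exists_grid_eventually_isHittable hR (show 0 < η / 4 by positivity)
    hρ (half_pos hp₀)
  filter_upwards [Filter.eventually_gt_atTop 0, hhit,
    eventually_net_mul_miss_le (hr.trans hrs).le hrs (half_pos hp₀),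
    eventually_precision_le hr.le hrs (show 0 < η / 4 by positivity),
    eventually_mul_codebookSize_add_one_le (hr.trans hrs).le (lt_add_of_pos_right s hρ) grid.card]
    with n hn hhit hmiss hprec hsize
  obtain ⟨C, f, hC, hcard, hf, hint⟩ := exists_codebook_forall_integral_dSig_le hn hR
    (show 0 < η / 4 by positivity) (p := 1 / 4 * exp (-(n * r))) (by positivity) hgrid
    (fun S => let ⟨q, hq, h⟩ := hhit S; ⟨q, hq, h.mono (by linarith) le_rfl⟩)
    (fun S E hE => hui n S E (by linarith)) (codebookSize_pos s n) hmiss hprec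
  refine ⟨C, f, hC, logb_two_le_of_le_exp (by exact_mod_cast hC.card_pos) ?_, hf, fun S => ?_⟩
  · calc (C.card : ℝ) ≤ grid.card * codebookSize s n + 1 := by exact_mod_cast hcard
      _ ≤ exp (n * (s + ρ)) := hsize
      _ = _ := by congr 1; simp only [s, r, hρ_def]; ring
  · exact (hint S).trans_eq (by ring)

end Asymptotics

/-- The spectral data of a positive semidefinite matrix of trace `n`. -/
def SpectralCov.ofPosSemidef {n : ℕ} {U : Matrix (Fin n) (Fin n) ℝ} {lam : Fin n → ℝ}
    (hpsd : (U * diagonal lam * Uᵀ).PosSemidef) (htrace : (U * diagonal lam * Uᵀ).trace = n)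
    (hU : U * Uᵀ = 1) : SpectralCov n where
  U := U
  lam := lam
  mul_transpose := hU
  lam_nonneg := by
    have hUU : Uᵀ * U = 1 := mul_eq_one_comm.1 hU
    have h := hpsd.conjTranspose_mul_mul_same U
    rwa [conjTranspose_eq_transpose_of_trivial, ← mul_assoc, ← mul_assoc, hUU, one_mul, mul_assoc,
      hUU, mul_one, posSemidef_diagonal_iff] at h
  sum_lam := by
    rwa [trace_mul_comm, ← mul_assoc, mul_eq_one_comm.1 hU, one_mul, trace_diagonal] at htrace

end RandomCoding

/-- existence of a single universal codebook `C` with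
`log₂|C| ≤ n(R* + ε)`, simultaneously near-optimal for all PSD `Σ` of trace `n`. -/
theorem stmt_3 (Rstar ε η : ℝ) (hRstar : 0 < Rstar) (hε : 0 < ε) (hη : 0 < η) :
    ∃ n₀ : ℕ, ∀ n : ℕ, n₀ ≤ n →
      ∃ (C : Finset (Fin n → ℝ))
        (f : (Fin n → ℝ) → Matrix (Fin n) (Fin n) ℝ → (Fin n → ℝ)),
        C.Nonempty ∧
        Real.logb 2 (C.card : ℝ) ≤ (n : ℝ) * (Rstar + ε) ∧
        (∀ w Sig, f w Sig ∈ C) ∧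
        (∀ (Sig : Matrix (Fin n) (Fin n) ℝ), Sig.PosSemidef → Sig.trace = (n : ℝ) →
         ∀ (U : Matrix (Fin n) (Fin n) ℝ), U * Uᵀ = 1 →
         ∀ lam : Fin n → ℝ, Sig = U * Matrix.diagonal lam * Uᵀ →
           (1 / (n : ℝ)) * ∫ w, dSig Sig w (f w Sig) ∂(stdGaussian n)
             ≤ DDrc lam Rstar + η * Sig.trace / (n : ℝ)) := by
  obtain ⟨n₀, hn₀⟩ := Filter.eventually_atTop.1
    ((Filter.eventually_gt_atTop 0).and
      (RandomCoding.eventually_exists_universal_codebook hRstar hε hη))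
  refine ⟨n₀, fun n hn => ?_⟩
  obtain ⟨hpos, C, f, hC, hrate, hf, hdist⟩ := hn₀ n hn
  refine ⟨C, f, hC, hrate, hf, ?_⟩
  rintro _ hpsd htrace U hU lam rfl
  have hn' : (0 : ℝ) < n := by exact_mod_cast hpos
  rw [htrace, mul_div_cancel_right₀ _ hn'.ne', one_div, inv_mul_le_iff₀ hn']
  exact hdist (.ofPosSemidef hpsd htrace hU)
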